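/- arXiv:1905.04131 — 4 statements merged into one kernel-verified Lean document; each statement's English description precedes it below -/
import Mathlib

section
/- Let 0 ≤ ν ≤ 1 and define, with either choice of sign, τ(x) = 1 ± (1/x)(1 - cosh((1-ν)x)/cosh(x)) for x > 0. Then the Laplace transform L(τ) is a generalized Stieltjes function of order 2 (hence τ is infinitely divisible), and for x > 0: L(τ)(x) = 1/x ± log( 4 Γ((x-ν)/4 + 1) Γ((x+ν)/4 + 1/2) / ( x Γ((x-ν)/4 + 1/2) Γ((x+ν)/4) ) ). -/
open MeasureTheory Filter Set

/-- The Laplace transform of `g`. -/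
noncomputable def LaplaceTransform (g : ℝ → ℝ) (x : ℝ) : ℝ :=
  ∫ t in Set.Ioi (0:ℝ), Real.exp (-x * t) * g t

/-- `f` is completely monotonic on `(0,∞)`. -/
def CompletelyMonotonic (f : ℝ → ℝ) : Prop :=
  (∀ x : ℝ, 0 < x → ContDiffAt ℝ (⊤ : ℕ∞) f x) ∧
  ∀ (n : ℕ) (x : ℝ), 0 < x → 0 ≤ (-1 : ℝ) ^ n * iteratedDeriv n f x

/-- `f` is logarithmically completely monotonic on `(0,∞)`. -/
def LogCompletelyMonotonic (f : ℝ → ℝ) : Prop :=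
  (∀ x : ℝ, 0 < x → 0 < f x) ∧ (∀ x : ℝ, 0 < x → ContDiffAt ℝ (⊤ : ℕ∞) f x) ∧
  CompletelyMonotonic (fun x => -deriv f x / f x)

/-- `f` is a generalized Stieltjes function of order `lam` on `(0,∞)`. -/
def IsGenStieltjes (lam : ℝ) (f : ℝ → ℝ) : Prop :=
  ∃ (μ : Measure ℝ) (c : ℝ), 0 ≤ c ∧ μ (Set.Iio 0) = 0 ∧
    ∀ x : ℝ, 0 < x →
      Integrable (fun t => (x + t) ^ (-lam)) μ ∧
      f x = (∫ t, (x + t) ^ (-lam) ∂μ) + c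

/-- Nielsen's beta function. -/
noncomputable def nielsenBeta (x : ℝ) : ℝ :=
  ∫ t in Set.Ioi (0:ℝ), Real.exp (-x * t) / (1 + Real.exp (-t))

/-!
Write `w(t) = 1 - cosh ((1 - ν) t) / cosh t`, `p(t) = w(t) / t` and `τ = 1 + ε p`.

*Stieltjes representation.* `w(t) / t ^ 2` is the Laplace transform of a `2`-antiperiodic wave `m`
of trapezoids with values in `[-1, 1]`, so `τ(t)` is `t` times the Laplace transform of the
nonnegative density `1 + ε m`, and Fubini exhibits `L τ` as a Stieltjes function of order `2`.

*Infinite divisibility.* `-(L τ)' / L τ` is the Laplace transform of the solution `κ` of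
`κ * τ = t τ` (convolution). Writing `κ = 1 + ε r`, this becomes the Volterra equation
`r + ε p' * r = w' - p`, whose kernel has total variation `2 max p < 1`. Since `w''` changes sign
once, `p` is unimodal, and then `|w' - p| + ∫₀ᵗ |p'| ≤ 1`; hence the ball `|r| ≤ 1` is preserved by
the fixed point map and `κ ≥ 0`.

*Closed form.* `L p` and the logarithm of the Gamma quotient both tend to `0` at infinity and have
the same sum of values at `x` and `x + 2`, the former by Frullani's integral, so they coincide.
-/

/-! ## Laplace transforms -/

/-- The Laplace integral of `g` converges absolutely at every `x > 0`; without this hypothesis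
`LaplaceTransform g` takes junk values. -/
def LaplaceIntegrable (g : ℝ → ℝ) : Prop :=
  ∀ x : ℝ, 0 < x → IntegrableOn (fun t => Real.exp (-x * t) * g t) (Ioi 0)

lemma laplaceTransform_congr {f g : ℝ → ℝ} (h : ∀ t, 0 < t → f t = g t) :
    LaplaceTransform f = LaplaceTransform g :=
  funext fun x => setIntegral_congr_fun measurableSet_Ioi fun t ht => by simp only [h t ht]

namespace LaplaceIntegrable

variable {f g : ℝ → ℝ} {C x : ℝ}

lemma congr (hf : LaplaceIntegrable f) (h : ∀ t, 0 < t → f t = g t) : LaplaceIntegrable g :=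
  fun x hx => (hf x hx).congr_fun (fun t ht => by simp only [h t ht]) measurableSet_Ioi

lemma add (hf : LaplaceIntegrable f) (hg : LaplaceIntegrable g) :
    LaplaceIntegrable fun t => f t + g t := fun x hx =>
  ((hf x hx).add (hg x hx)).congr_fun (fun t _ => (mul_add _ (f t) (g t)).symm) measurableSet_Ioi

lemma sub (hf : LaplaceIntegrable f) (hg : LaplaceIntegrable g) :
    LaplaceIntegrable fun t => f t - g t := fun x hx =>
  ((hf x hx).sub (hg x hx)).congr_fun (fun t _ => (mul_sub _ (f t) (g t)).symm) measurableSet_Ioi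

lemma const_mul (c : ℝ) (hg : LaplaceIntegrable g) : LaplaceIntegrable fun t => c * g t :=
  fun x hx => IntegrableOn.congr_fun (Integrable.const_mul (hg x hx) c)
    (fun t _ => mul_left_comm c _ (g t)) measurableSet_Ioi

lemma of_bounded (hg : AEStronglyMeasurable g (volume.restrict (Ioi 0)))
    (hC : ∀ t, 0 < t → |g t| ≤ C) : LaplaceIntegrable g := by
  intro x hx
  refine Integrable.mul_bdd (c := C) (integrableOn_exp_mul_Ioi (neg_lt_zero.2 hx) 0) hg ?_
  filter_upwards [ae_restrict_mem measurableSet_Ioi] with t ht using hC t ht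

lemma of_integrableOn (hg : IntegrableOn g (Ioi 0)) : LaplaceIntegrable g := by
  intro x hx
  refine Integrable.bdd_mul (c := 1) hg (by fun_prop) ?_
  filter_upwards [ae_restrict_mem measurableSet_Ioi] with t ht
  rw [Real.norm_eq_abs, Real.abs_exp, Real.exp_le_one_iff]
  exact mul_nonpos_of_nonpos_of_nonneg (neg_nonpos.2 hx.le) ht.le

lemma of_const (c : ℝ) : LaplaceIntegrable fun _ => c :=
  of_bounded aestronglyMeasurable_const fun _ _ => le_rfl

lemma rpow {a : ℝ} (ha : 0 < a) : LaplaceIntegrable fun t => t ^ (a - 1) := fun x hx =>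
  (integrableOn_rpow_mul_exp_neg_mul_rpow (s := a - 1) (by linarith) one_pos hx).congr_fun
    (fun t _ => by simp only [Real.rpow_one, mul_comm]) measurableSet_Ioi

lemma id : LaplaceIntegrable fun t => t :=
  (rpow two_pos).congr fun t _ => by norm_num

lemma laplaceTransform_add (hf : LaplaceIntegrable f) (hg : LaplaceIntegrable g) (hx : 0 < x) :
    LaplaceTransform (fun t => f t + g t) x = LaplaceTransform f x + LaplaceTransform g x := by
  simp only [LaplaceTransform, mul_add]
  exact integral_add (hf x hx) (hg x hx)

lemma laplaceTransform_sub (hf : LaplaceIntegrable f) (hg : LaplaceIntegrable g) (hx : 0 < x) :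
    LaplaceTransform (fun t => f t - g t) x = LaplaceTransform f x - LaplaceTransform g x := by
  simp only [LaplaceTransform, mul_sub]
  exact integral_sub (hf x hx) (hg x hx)

lemma laplaceTransform_pos (hg : LaplaceIntegrable g) (hpos : ∀ t, 0 < t → 0 < g t) (hx : 0 < x) :
    0 < LaplaceTransform g x := by
  have integrand_pos : ∀ t ∈ Ioi (0 : ℝ), 0 < Real.exp (-x * t) * g t := fun t ht =>
    mul_pos (Real.exp_pos _) (hpos t ht)
  refine (setIntegral_pos_iff_support_of_nonneg_ae ?_ (hg x hx)).2 ?_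
  · filter_upwards [ae_restrict_mem measurableSet_Ioi] with t ht using (integrand_pos t ht).le
  · have support_eq : Function.support (fun t => Real.exp (-x * t) * g t) ∩ Ioi 0 = Ioi 0 :=
      inter_eq_right.2 fun t ht => (integrand_pos t ht).ne'
    rw [support_eq, Real.volume_Ioi]
    exact ENNReal.zero_lt_top

end LaplaceIntegrable

lemma laplaceTransform_const_mul (c : ℝ) (g : ℝ → ℝ) (x : ℝ) :
    LaplaceTransform (fun t => c * g t) x = c * LaplaceTransform g x := by
  simp only [LaplaceTransform, ← integral_const_mul, mul_left_comm c]

section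

variable {f f' g : ℝ → ℝ} {C x : ℝ}

lemma laplaceTransform_one (hx : 0 < x) : LaplaceTransform (fun _ => 1) x = 1 / x := by
  simp only [LaplaceTransform, mul_one]
  rw [integral_exp_mul_Ioi (neg_lt_zero.2 hx)]
  simp

lemma laplaceTransform_one_add_const_mul (ε : ℝ) (hg : LaplaceIntegrable g) (hx : 0 < x) :
    LaplaceTransform (fun t => 1 + ε * g t) x = 1 / x + ε * LaplaceTransform g x := by
  rw [(LaplaceIntegrable.of_const 1).laplaceTransform_add (hg.const_mul ε) hx,
    laplaceTransform_one hx, laplaceTransform_const_mul]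

lemma laplaceTransform_rpow {a : ℝ} (ha : 0 < a) (hx : 0 < x) :
    LaplaceTransform (fun t => t ^ (a - 1)) x = Real.Gamma a * x ^ (-a) := by
  have gamma_integral := Real.integral_rpow_mul_exp_neg_mul_Ioi ha hx
  rw [one_div, Real.inv_rpow hx.le, ← Real.rpow_neg hx.le, mul_comm] at gamma_integral
  simp only [LaplaceTransform, ← gamma_integral, neg_mul, mul_comm (Real.exp _)]

lemma laplaceTransform_id (hx : 0 < x) : LaplaceTransform (fun t => t) x = 1 / x ^ 2 := by
  have h := laplaceTransform_rpow two_pos hx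
  rw [Real.Gamma_two, one_mul, Real.rpow_neg hx.le, Real.rpow_two, ← one_div] at h
  rw [← h]
  exact congrFun (laplaceTransform_congr fun t _ => by norm_num) x

lemma abs_laplaceTransform_le (hC : ∀ t, 0 < t → |g t| ≤ C) (hx : 0 < x) :
    |LaplaceTransform g x| ≤ C / x := by
  calc |LaplaceTransform g x|
      ≤ ∫ t in Ioi (0 : ℝ), C * Real.exp (-x * t) := by
        rw [← Real.norm_eq_abs, LaplaceTransform]
        refine norm_integral_le_of_norm_le
          (Integrable.const_mul (integrableOn_exp_mul_Ioi (neg_lt_zero.2 hx) 0) C) ?_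
        filter_upwards [ae_restrict_mem measurableSet_Ioi] with t ht
        rw [norm_mul, Real.norm_eq_abs, Real.abs_exp, mul_comm]
        exact mul_le_mul_of_nonneg_right (hC t ht) (Real.exp_pos _).le
    _ = C / x := by
        rw [integral_const_mul, integral_exp_mul_Ioi (neg_lt_zero.2 hx)]
        simp [div_eq_mul_inv]

lemma tendsto_laplaceTransform_atTop (hC : ∀ t, 0 < t → |g t| ≤ C) :
    Tendsto (LaplaceTransform g) atTop (nhds 0) := by
  refine squeeze_zero_norm' ?_ (tendsto_const_nhds.div_atTop tendsto_id : Tendsto (C / ·) atTop _)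
  filter_upwards [Ioi_mem_atTop 0] with x hx using abs_laplaceTransform_le hC hx

lemma laplaceTransform_of_hasDerivAt (hf : ContinuousWithinAt f (Ici 0) 0)
    (hff' : ∀ t, 0 < t → HasDerivAt f (f' t) t) (hC : ∀ t, 0 < t → |f t| ≤ C)
    (hf' : LaplaceIntegrable f') (hx : 0 < x) :
    LaplaceTransform f' x = x * LaplaceTransform f x - f 0 := by
  have f_continuousOn : ContinuousOn f (Ioi 0) := fun t ht =>
    (hff' t ht).continuousAt.continuousWithinAt
  have f_integrable := LaplaceIntegrable.of_bounded
    (f_continuousOn.aestronglyMeasurable measurableSet_Ioi) hC x hx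
  have exp_tendsto : Tendsto (fun t => Real.exp (-x * t)) atTop (nhds 0) :=
    Real.tendsto_exp_atBot.comp (tendsto_id.const_mul_atTop_of_neg (neg_lt_zero.2 hx))
  have f_bounded : IsBoundedUnder (· ≤ ·) atTop (norm ∘ f) :=
    isBoundedUnder_of_eventually_le (a := C) (by
      filter_upwards [Ioi_mem_atTop 0] with t ht using hC t ht)
  have deriv_exp_mul : ∀ t ∈ Ioi (0 : ℝ), HasDerivAt (fun t => Real.exp (-x * t) * f t)
      (Real.exp (-x * t) * f' t - x * (Real.exp (-x * t) * f t)) t := fun t ht => by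
    refine ((((hasDerivAt_id t).const_mul (-x)).exp.mul (hff' t ht)).congr_deriv ?_)
    simp only [id]
    ring
  have ftc := integral_Ioi_of_hasDerivAt_of_tendsto (ContinuousWithinAt.mul (by fun_prop) hf)
    deriv_exp_mul ((hf' x hx).sub (f_integrable.const_mul x))
    (exp_tendsto.zero_mul_isBoundedUnder_le f_bounded)
  rw [integral_sub (hf' x hx) (f_integrable.const_mul x), integral_const_mul] at ftc
  simp only [Pi.mul_apply, mul_zero, Real.exp_zero, one_mul, zero_sub] at ftc
  simp only [LaplaceTransform]
  linarith

lemma laplaceTransform_convolution (hf : LaplaceIntegrable f) (hg : LaplaceIntegrable g)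
    (hx : 0 < x) : LaplaceTransform (fun t => ∫ u in (0 : ℝ)..t, f u * g (t - u)) x =
      LaplaceTransform f x * LaplaceTransform g x := by
  have h := integral_posConvolution (hf x hx) (hg x hx) (ContinuousLinearMap.mul ℝ ℝ)
  simp only [ContinuousLinearMap.mul_apply'] at h
  rw [LaplaceTransform, LaplaceTransform, LaplaceTransform, ← h]
  refine integral_congr_ae (Eventually.of_forall fun t => ?_)
  simp only [← intervalIntegral.integral_const_mul]
  refine intervalIntegral.integral_congr fun u _ => ?_
  have exp_split : Real.exp (-x * t) = Real.exp (-x * u) * Real.exp (-x * (t - u)) := by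
    rw [← Real.exp_add]
    ring_nf
  simp only [exp_split]
  ring

end

/-- `g` started at time `α`: the translate of the restriction of `g` to `(0,∞)`. -/
noncomputable def delay (α : ℝ) (g : ℝ → ℝ) (t : ℝ) : ℝ :=
  (Ioi 0).indicator g (t - α)

section

variable {α x : ℝ} {g : ℝ → ℝ}

lemma delay_of_le {t : ℝ} (ht : t ≤ α) : delay α g t = 0 :=
  indicator_of_notMem (notMem_Ioi.2 (sub_nonpos.2 ht)) g

lemma delay_of_lt {t : ℝ} (ht : α < t) : delay α g t = g (t - α) :=
  indicator_of_mem (mem_Ioi.2 (sub_pos.2 ht)) g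

lemma exp_mul_delay (α x : ℝ) (g : ℝ → ℝ) (t : ℝ) : Real.exp (-x * t) * delay α g t =
    Real.exp (-α * x) * (Ioi 0).indicator (fun s => Real.exp (-x * s) * g s) (t - α) := by
  rw [delay, indicator_mul_right (Ioi 0) (fun s => Real.exp (-x * s)), ← mul_assoc, ← Real.exp_add]
  ring_nf

lemma LaplaceIntegrable.delay (α : ℝ) (hg : LaplaceIntegrable g) :
    LaplaceIntegrable (delay α g) := fun x hx => by
  simp only [exp_mul_delay]
  exact (((integrable_indicator_iff measurableSet_Ioi).2 (hg x hx)).comp_sub_right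
    α).const_mul _ |>.integrableOn

lemma laplaceTransform_delay (hα : 0 ≤ α) (g : ℝ → ℝ) (x : ℝ) :
    LaplaceTransform (delay α g) x = Real.exp (-α * x) * LaplaceTransform g x := by
  rw [LaplaceTransform, setIntegral_eq_integral_of_forall_compl_eq_zero fun t ht => by
    rw [delay_of_le ((notMem_Ioi.1 ht).trans hα), mul_zero]]
  simp only [exp_mul_delay]
  rw [integral_const_mul, integral_sub_right_eq_self
    ((Ioi 0).indicator fun s => Real.exp (-x * s) * g s) α, integral_indicator measurableSet_Ioi,
    LaplaceTransform]

end

/-! ## Complete monotonicity -/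

lemma CompletelyMonotonic.congr {f g : ℝ → ℝ} (hf : CompletelyMonotonic f)
    (h : ∀ x, 0 < x → f x = g x) : CompletelyMonotonic g := by
  have eventuallyEq : ∀ x, 0 < x → g =ᶠ[nhds x] f := fun x hx => by
    filter_upwards [Ioi_mem_nhds hx] with y hy using (h y hy).symm
  refine ⟨fun x hx => (hf.1 x hx).congr_of_eventuallyEq (eventuallyEq x hx), fun n x hx => ?_⟩
  rw [(eventuallyEq x hx).iteratedDeriv_eq n]
  exact hf.2 n x hx

/-- The measure `g(t) dt` on `(0,∞)`, for a density `g` that is nonnegative there. -/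
noncomputable def densityMeasure (g : ℝ → ℝ) : Measure ℝ :=
  (volume.restrict (Ioi 0)).withDensity fun t => ENNReal.ofReal (g t)

section

variable {g : ℝ → ℝ}

lemma integral_densityMeasure (hg : AEMeasurable g (volume.restrict (Ioi 0)))
    (hg0 : ∀ t, 0 < t → 0 ≤ g t) (f : ℝ → ℝ) :
    ∫ t, f t ∂densityMeasure g = ∫ t in Ioi 0, f t * g t := by
  rw [densityMeasure, integral_withDensity_eq_integral_toReal_smul₀ hg.ennreal_ofReal (by simp)]
  refine setIntegral_congr_fun measurableSet_Ioi fun t ht => ?_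
  simp only [ENNReal.toReal_ofReal (hg0 t ht), smul_eq_mul, mul_comm]

lemma integrable_densityMeasure (hg : AEMeasurable g (volume.restrict (Ioi 0)))
    (hg0 : ∀ t, 0 < t → 0 ≤ g t) {f : ℝ → ℝ} :
    Integrable f (densityMeasure g) ↔ IntegrableOn (fun t => f t * g t) (Ioi 0) := by
  rw [densityMeasure, integrable_withDensity_iff_integrable_smul₀' hg.ennreal_ofReal (by simp)]
  refine integrableOn_congr_fun (fun t ht => ?_) measurableSet_Ioi
  simp only [ENNReal.toReal_ofReal (hg0 t ht), smul_eq_mul, mul_comm]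

namespace LaplaceIntegrable

lemma aemeasurable (hg : LaplaceIntegrable g) : AEMeasurable g (volume.restrict (Ioi 0)) := by
  have h := Real.measurable_exp.aemeasurable.mul (hg 1 one_pos).aestronglyMeasurable.aemeasurable
  refine h.congr (Eventually.of_forall fun t => ?_)
  simp [← mul_assoc, ← Real.exp_add]

lemma laplaceTransform_eq_mgf (hg : LaplaceIntegrable g) (hg0 : ∀ t, 0 < t → 0 ≤ g t) :
    LaplaceTransform g = ProbabilityTheory.mgf Neg.neg (densityMeasure g) := by
  ext x
  rw [ProbabilityTheory.mgf, integral_densityMeasure hg.aemeasurable hg0]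
  simp only [mul_neg, ← neg_mul, LaplaceTransform]

lemma mem_interior_integrableExpSet (hg : LaplaceIntegrable g) (hg0 : ∀ t, 0 < t → 0 ≤ g t)
    {x : ℝ} (hx : 0 < x) :
    x ∈ interior (ProbabilityTheory.integrableExpSet Neg.neg (densityMeasure g)) := by
  have Ioi_subset : Ioi 0 ⊆ ProbabilityTheory.integrableExpSet Neg.neg (densityMeasure g) :=
    fun y hy => by
      refine (integrable_densityMeasure hg.aemeasurable hg0).2 ?_
      simpa only [mul_neg, ← neg_mul] using hg y hy
  exact interior_maximal Ioi_subset isOpen_Ioi hx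

lemma contDiffAt_laplaceTransform (hg : LaplaceIntegrable g) (hg0 : ∀ t, 0 < t → 0 ≤ g t)
    {x : ℝ} (hx : 0 < x) : ContDiffAt ℝ (⊤ : ℕ∞) (LaplaceTransform g) x := by
  rw [hg.laplaceTransform_eq_mgf hg0]
  exact (ProbabilityTheory.analyticAt_mgf (hg.mem_interior_integrableExpSet hg0 hx)).contDiffAt

lemma iteratedDeriv_laplaceTransform (hg : LaplaceIntegrable g) (hg0 : ∀ t, 0 < t → 0 ≤ g t)
    (n : ℕ) {x : ℝ} (hx : 0 < x) : iteratedDeriv n (LaplaceTransform g) x =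
      (-1) ^ n * LaplaceTransform (fun t => t ^ n * g t) x := by
  rw [hg.laplaceTransform_eq_mgf hg0, ProbabilityTheory.iteratedDeriv_mgf
    (hg.mem_interior_integrableExpSet hg0 hx), integral_densityMeasure hg.aemeasurable hg0,
    LaplaceTransform, ← integral_const_mul]
  refine setIntegral_congr_fun measurableSet_Ioi fun t _ => ?_
  simp only [neg_pow t, mul_neg, neg_mul]
  ring

lemma completelyMonotonic (hg : LaplaceIntegrable g) (hg0 : ∀ t, 0 < t → 0 ≤ g t) :
    CompletelyMonotonic (LaplaceTransform g) := by
  refine ⟨fun x hx => hg.contDiffAt_laplaceTransform hg0 hx, fun n x hx => ?_⟩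
  rw [hg.iteratedDeriv_laplaceTransform hg0 n hx, ← mul_assoc, ← mul_pow, neg_one_mul, neg_neg,
    one_pow, one_mul]
  refine setIntegral_nonneg measurableSet_Ioi fun t ht => ?_
  exact mul_nonneg (Real.exp_pos _).le (mul_nonneg (pow_nonneg ht.le n) (hg0 t ht))

lemma logCompletelyMonotonic {κ : ℝ → ℝ} (hg : LaplaceIntegrable g)
    (hgpos : ∀ t, 0 < t → 0 < g t) (hκ : LaplaceIntegrable κ) (hκ0 : ∀ t, 0 < t → 0 ≤ κ t)
    (h : ∀ x, 0 < x →
      LaplaceTransform (fun t => t * g t) x = LaplaceTransform κ x * LaplaceTransform g x) :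
    LogCompletelyMonotonic (LaplaceTransform g) := by
  have hg0 : ∀ t, 0 < t → 0 ≤ g t := fun t ht => (hgpos t ht).le
  have pos : ∀ x, 0 < x → 0 < LaplaceTransform g x := fun x hx => hg.laplaceTransform_pos hgpos hx
  refine ⟨pos, fun x hx => hg.contDiffAt_laplaceTransform hg0 hx,
    (hκ.completelyMonotonic hκ0).congr fun x hx => ?_⟩
  have deriv_eq := hg.iteratedDeriv_laplaceTransform hg0 1 hx
  simp only [iteratedDeriv_one, pow_one, neg_one_mul, h x hx] at deriv_eq
  rw [deriv_eq, neg_neg, mul_div_cancel_right₀ _ (pos x hx).ne']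

end LaplaceIntegrable

end

/-! ## A Volterra equation -/

section Volterra

open scoped BoundedContinuousFunction

variable {q : ℝ → ℝ}

lemma integrableOn_mul_comp_sub (hq : IntegrableOn q (Ioi 0)) (r : ℝ →ᵇ ℝ) (t : ℝ) :
    IntegrableOn (fun u => q u * r (t - u)) (Ioi 0) :=
  Integrable.mul_bdd (c := ‖r‖) hq (r.continuous.comp (by fun_prop)).aestronglyMeasurable
    (Eventually.of_forall fun _ => r.norm_coe_le_norm _)

/-- The convolution of `r` with the restriction of `q` to `(0,∞)`. -/
noncomputable def halfLineConvolution (hq : IntegrableOn q (Ioi 0)) (r : ℝ →ᵇ ℝ) : ℝ →ᵇ ℝ :=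
  BoundedContinuousFunction.ofNormedAddCommGroup (fun t => ∫ u in Ioi 0, q u * r (t - u))
    (by
      refine continuous_of_dominated (bound := fun u => |q u| * ‖r‖)
        (fun t => (integrableOn_mul_comp_sub hq r t).aestronglyMeasurable)
        (fun t => Eventually.of_forall fun u => ?_) (hq.norm.mul_const _)
        (Eventually.of_forall fun u => by fun_prop)
      rw [norm_mul]
      exact mul_le_mul_of_nonneg_left (r.norm_coe_le_norm _) (abs_nonneg _))
    ((∫ u in Ioi 0, |q u|) * ‖r‖) fun t => by
      rw [← integral_mul_const]
      refine norm_integral_le_of_norm_le (hq.norm.mul_const _) (Eventually.of_forall fun u => ?_)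
      rw [norm_mul]
      exact mul_le_mul_of_nonneg_left (r.norm_coe_le_norm _) (abs_nonneg _)

lemma halfLineConvolution_apply (hq : IntegrableOn q (Ioi 0)) (r : ℝ →ᵇ ℝ) (t : ℝ) :
    halfLineConvolution hq r t = ∫ u in Ioi 0, q u * r (t - u) :=
  rfl

lemma norm_halfLineConvolution_le (hq : IntegrableOn q (Ioi 0)) (r : ℝ →ᵇ ℝ) :
    ‖halfLineConvolution hq r‖ ≤ (∫ u in Ioi 0, |q u|) * ‖r‖ :=
  BoundedContinuousFunction.norm_ofNormedAddCommGroup_le _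
    (mul_nonneg (integral_nonneg fun _ => abs_nonneg _) (norm_nonneg r)) _

lemma halfLineConvolution_sub (hq : IntegrableOn q (Ioi 0)) (r s : ℝ →ᵇ ℝ) :
    halfLineConvolution hq (r - s) = halfLineConvolution hq r - halfLineConvolution hq s := by
  ext t
  simp only [halfLineConvolution_apply, BoundedContinuousFunction.sub_apply, mul_sub]
  exact integral_sub (integrableOn_mul_comp_sub hq r t) (integrableOn_mul_comp_sub hq s t)

lemma halfLineConvolution_of_nonpos (hq : IntegrableOn q (Ioi 0)) {r : ℝ →ᵇ ℝ}
    (hr : ∀ t, t ≤ 0 → r t = 0) {t : ℝ} (ht : t ≤ 0) : halfLineConvolution hq r t = 0 :=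
  setIntegral_eq_zero_of_forall_eq_zero fun u hu => by
    rw [hr _ (by linarith [mem_Ioi.1 hu]), mul_zero]

lemma halfLineConvolution_of_nonneg (hq : IntegrableOn q (Ioi 0)) {r : ℝ →ᵇ ℝ}
    (hr : ∀ t, t ≤ 0 → r t = 0) {t : ℝ} (ht : 0 ≤ t) :
    halfLineConvolution hq r t = ∫ u in (0 : ℝ)..t, q u * r (t - u) := by
  rw [intervalIntegral.integral_of_le ht, halfLineConvolution_apply]
  refine setIntegral_eq_of_subset_of_forall_sdiff_eq_zero measurableSet_Ioi Ioc_subset_Ioi_self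
    fun u ⟨hu, hut⟩ => ?_
  rw [hr _ (by by_contra! h; exact hut ⟨hu, by linarith⟩), mul_zero]

lemma abs_halfLineConvolution_le (hq : IntegrableOn q (Ioi 0)) {r : ℝ →ᵇ ℝ} {C : ℝ}
    (hr : ∀ t, t ≤ 0 → r t = 0) (hrC : ∀ t, |r t| ≤ C) {t : ℝ} (ht : 0 ≤ t) :
    |halfLineConvolution hq r t| ≤ C * ∫ u in (0 : ℝ)..t, |q u| := by
  rw [halfLineConvolution_of_nonneg hq hr ht, ← intervalIntegral.integral_const_mul,
    ← Real.norm_eq_abs]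
  refine intervalIntegral.norm_integral_le_of_norm_le ht (Eventually.of_forall fun u _ => ?_)
    (((intervalIntegrable_iff_integrableOn_Ioc_of_le ht).2
      (hq.mono_set Ioc_subset_Ioi_self)).norm.const_mul C)
  rw [norm_mul, mul_comm]
  exact mul_le_mul_of_nonneg_right (hrC _) (abs_nonneg _)

/-- The continuous functions bounded by `C` and vanishing on `(-∞,0]`. -/
def causalBall (C : ℝ) : Set (ℝ →ᵇ ℝ) :=
  {r | (∀ t, t ≤ 0 → r t = 0) ∧ ∀ t, |r t| ≤ C}

lemma isClosed_causalBall (C : ℝ) : IsClosed (causalBall C) := by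
  simp only [causalBall, ofPred_and, ofPred_forall]
  have eval_continuous (t : ℝ) : Continuous fun r : ℝ →ᵇ ℝ => r t :=
    continuous_eval_const t
  exact (isClosed_iInter fun t => isClosed_iInter fun _ =>
      isClosed_eq (eval_continuous t) continuous_const).inter
    (isClosed_iInter fun t => isClosed_le (eval_continuous t).abs continuous_const)

lemma exists_fixedPoint_sub_halfLineConvolution (hq : IntegrableOn q (Ioi 0))
    (hq1 : ∫ t in Ioi 0, |q t| < 1) {g : ℝ →ᵇ ℝ} (hg : ∀ t, t ≤ 0 → g t = 0) {C : ℝ} (hC : 0 ≤ C)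
    (hgC : ∀ t, 0 ≤ t → |g t| + C * ∫ u in (0 : ℝ)..t, |q u| ≤ C) :
    ∃ r ∈ causalBall C, g - halfLineConvolution hq r = r := by
  have mapsTo : MapsTo (fun r => g - halfLineConvolution hq r) (causalBall C) (causalBall C) := by
    refine fun r ⟨hr, hrC⟩ => ⟨fun t ht => ?_, fun t => ?_⟩
    · simp [hg t ht, halfLineConvolution_of_nonpos hq hr ht]
    · rcases le_total t 0 with ht | ht
      · simpa [hg t ht, halfLineConvolution_of_nonpos hq hr ht] using hC
      · calc |g t - halfLineConvolution hq r t|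
            ≤ |g t| + |halfLineConvolution hq r t| := abs_sub _ _
          _ ≤ |g t| + C * ∫ u in (0 : ℝ)..t, |q u| := by
              gcongr
              exact abs_halfLineConvolution_le hq hr hrC ht
          _ ≤ C := hgC t ht
  have lipschitz : LipschitzWith (∫ t in Ioi 0, |q t|).toNNReal
      fun r => g - halfLineConvolution hq r := by
    refine LipschitzWith.of_dist_le' fun r s => ?_
    rw [dist_eq_norm, dist_eq_norm, sub_sub_sub_cancel_left, ← halfLineConvolution_sub,
      ← norm_neg (r - s), neg_sub]
    exact norm_halfLineConvolution_le hq _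
  have zero_mem : 0 ∈ causalBall C := ⟨fun _ _ => rfl, fun _ => by simpa using hC⟩
  obtain ⟨r, hr, fixed, -⟩ := ContractingWith.exists_fixedPoint' (isClosed_causalBall C).isComplete
    mapsTo ⟨Real.toNNReal_lt_one.2 hq1, lipschitz.lipschitzOnWith.mapsToRestrict mapsTo⟩ zero_mem
    (edist_ne_top _ _)
  exact ⟨r, hr, fixed⟩

lemma exists_bounded_volterra_solution {g : ℝ → ℝ} (hq : IntegrableOn q (Ioi 0))
    (hq1 : ∫ t in Ioi 0, |q t| < 1) (hg : ContinuousOn g (Ici 0)) (hg0 : g 0 = 0) {C : ℝ}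
    (hgC : ∀ t, 0 ≤ t → |g t| + C * ∫ u in (0 : ℝ)..t, |q u| ≤ C) :
    ∃ r : ℝ → ℝ, Continuous r ∧ (∀ t, |r t| ≤ C) ∧
      ∀ t, 0 < t → r t + ∫ u in (0 : ℝ)..t, q u * r (t - u) = g t := by
  have hC : 0 ≤ C := by simpa [hg0] using hgC 0 le_rfl
  have abs_le : ∀ t, 0 ≤ t → |g t| ≤ C := fun t ht => by
    have : 0 ≤ ∫ u in (0 : ℝ)..t, |q u| :=
      intervalIntegral.integral_nonneg ht fun _ _ => abs_nonneg _
    linarith [hgC t ht, mul_nonneg hC this]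
  let gExt : ℝ →ᵇ ℝ := BoundedContinuousFunction.ofNormedAddCommGroup (fun t => g (max t 0))
    (hg.comp_continuous (by fun_prop) fun t => le_max_right t 0) C
    fun t => abs_le _ (le_max_right t 0)
  have gExt_of_nonneg : ∀ t, 0 ≤ t → gExt t = g t := fun t ht => congrArg g (max_eq_left ht)
  obtain ⟨r, ⟨hr, hrC⟩, fixed⟩ := exists_fixedPoint_sub_halfLineConvolution hq hq1 (g := gExt)
    (fun t ht => (congrArg g (max_eq_right ht)).trans hg0) hC
    fun t ht => by simpa only [gExt_of_nonneg t ht] using hgC t ht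
  refine ⟨r, r.continuous, hrC, fun t ht => ?_⟩
  have fixed_apply := DFunLike.congr_fun fixed t
  rw [BoundedContinuousFunction.sub_apply, gExt_of_nonneg t ht.le,
    halfLineConvolution_of_nonneg hq hr ht.le] at fixed_apply
  linarith

end Volterra

/-! ## Functions with a single sign change -/

/-- On `(0,∞)`, `f` changes sign at most once, from nonnegative to nonpositive. -/
def CrossesDownward (f : ℝ → ℝ) : Prop :=
  ∀ ⦃s t : ℝ⦄, 0 < s → s ≤ t → f s < 0 → f t ≤ 0

namespace CrossesDownward

variable {f c F : ℝ → ℝ}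

lemma of_antitoneOn (hf : AntitoneOn f (Ioi 0)) : CrossesDownward f := fun _ _ hs hst hfs =>
  (hf hs (hs.trans_le hst) hst).trans hfs.le

lemma pos_mul (hf : CrossesDownward f) (hc : ∀ t, 0 < t → 0 < c t) :
    CrossesDownward fun t => c t * f t := fun s t hs hst h => by
  have hfs : f s < 0 := (pos_iff_neg_of_mul_neg h).1 (hc s hs)
  exact mul_nonpos_of_nonneg_of_nonpos (hc t (hs.trans_le hst)).le (hf hs hst hfs)

lemma of_hasDerivAt (hf : CrossesDownward f) (hF : ContinuousOn F (Ici 0))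
    (hFf : ∀ t, 0 < t → HasDerivAt F (f t) t) (hF0 : 0 ≤ F 0) : CrossesDownward F := by
  intro s t hs hst hFs
  obtain ⟨r, hr, hfr⟩ := exists_hasDerivAt_eq_slope F f hs (hF.mono Icc_subset_Ici_self)
    fun u hu => hFf u hu.1
  have hfr_neg : f r < 0 := hfr ▸ div_neg_of_neg_of_pos (by linarith) (by linarith)
  have antitone_Ici : AntitoneOn F (Ici s) := by
    refine antitoneOn_of_hasDerivWithinAt_nonpos (f' := f) (convex_Ici s)
      (hF.mono (Ici_subset_Ici.2 hs.le)) (fun u hu => ?_) fun u hu => ?_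
    all_goals rw [interior_Ici, mem_Ioi] at hu
    · exact (hFf u (hs.trans hu)).hasDerivWithinAt
    · exact hf hr.1 (hr.2.trans hu).le hfr_neg
  exact (antitone_Ici self_mem_Ici hst hst).trans hFs.le

lemma nonneg_or_exists_sign (hf : CrossesDownward f) : (∀ t, 0 < t → 0 ≤ f t) ∨
    ∃ b, 0 ≤ b ∧ (∀ t ∈ Ioo 0 b, 0 ≤ f t) ∧ ∀ t ∈ Ioi b, f t ≤ 0 := by
  refine or_iff_not_imp_left.2 fun h => ?_
  push Not at h
  have bddBelow : BddBelow {t | 0 < t ∧ f t < 0} := ⟨0, fun t ht => ht.1.le⟩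
  refine ⟨sInf {t | 0 < t ∧ f t < 0}, le_csInf h fun t ht => ht.1.le, fun t ht => ?_,
    fun t ht => ?_⟩
  · by_contra! hft
    exact (csInf_le bddBelow ⟨ht.1, hft⟩).not_gt ht.2
  · obtain ⟨s, ⟨hs, hfs⟩, hst⟩ := exists_lt_of_csInf_lt h ht
    exact hf hs hst.le hfs

end CrossesDownward

section Unimodal

variable {p q : ℝ → ℝ} {a b : ℝ}

lemma integral_abs_deriv_of_nonneg (hab : a ≤ b) (hp : ContinuousOn p (Icc a b))
    (hpq : ∀ t ∈ Ioo a b, HasDerivAt p (q t) t) (hq : ∀ t ∈ Ioo a b, 0 ≤ q t) :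
    IntervalIntegrable q volume a b ∧ ∫ t in a..b, |q t| = p b - p a := by
  have q_integrable : IntervalIntegrable q volume a b :=
    (intervalIntegrable_iff_integrableOn_Ioc_of_le hab).2
      (intervalIntegral.integrableOn_deriv_of_nonneg hp hpq hq)
  refine ⟨q_integrable, ?_⟩
  rw [← intervalIntegral.integral_eq_sub_of_hasDerivAt_of_le hab hp hpq q_integrable,
    intervalIntegral.integral_of_le hab, intervalIntegral.integral_of_le hab,
    integral_Ioc_eq_integral_Ioo, integral_Ioc_eq_integral_Ioo]
  exact setIntegral_congr_fun measurableSet_Ioo fun t ht => abs_of_nonneg (hq t ht)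

lemma integral_abs_deriv_of_nonpos (hab : a ≤ b) (hp : ContinuousOn p (Icc a b))
    (hpq : ∀ t ∈ Ioo a b, HasDerivAt p (q t) t) (hq : ∀ t ∈ Ioo a b, q t ≤ 0) :
    IntervalIntegrable q volume a b ∧ ∫ t in a..b, |q t| = p a - p b := by
  obtain ⟨neg_integrable, h⟩ := integral_abs_deriv_of_nonneg hab hp.neg
    (fun t ht => (hpq t ht).neg) fun t ht => neg_nonneg.2 (hq t ht)
  refine ⟨by simpa only [Pi.neg_def, neg_neg] using neg_integrable.neg, ?_⟩
  simp only [abs_neg, Pi.neg_apply] at h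
  rw [h]
  ring

/-- `p`, with derivative `q`, increases on `[0,b]` and decreases on `[b,∞)`. -/
structure IsUnimodal (p q : ℝ → ℝ) (b : ℝ) : Prop where
  nonneg : 0 ≤ b
  continuousOn : ContinuousOn p (Ici 0)
  hasDerivAt : ∀ t, 0 < t → HasDerivAt p (q t) t
  deriv_nonneg : ∀ t ∈ Ioo 0 b, 0 ≤ q t
  deriv_nonpos : ∀ t ∈ Ioi b, q t ≤ 0

lemma exists_isUnimodal (hp : ContinuousOn p (Ici 0)) (hp0 : p 0 = 0)
    (hpq : ∀ t, 0 < t → HasDerivAt p (q t) t) (hq : CrossesDownward q)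
    (hptop : Tendsto p atTop (nhds 0)) : ∃ b, IsUnimodal p q b := by
  rcases hq.nonneg_or_exists_sign with q_nonneg | ⟨b, hb, q_nonneg, q_nonpos⟩
  · have monotone : MonotoneOn p (Ici 0) := by
      refine monotoneOn_of_hasDerivWithinAt_nonneg (f' := q) (convex_Ici 0) hp
        (fun t ht => ?_) fun t ht => ?_
      all_goals rw [interior_Ici, mem_Ioi] at ht
      · exact (hpq t ht).hasDerivWithinAt
      · exact q_nonneg t ht
    have p_eq_zero : ∀ t, 0 ≤ t → p t = 0 := fun t ht => by
      refine le_antisymm (ge_of_tendsto hptop ?_) (hp0 ▸ monotone self_mem_Ici ht ht)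
      filter_upwards [Ici_mem_atTop t] with u hu using monotone ht (ht.trans hu) hu
    have q_eq_zero : ∀ t, 0 < t → q t = 0 := fun t ht => by
      refine (hpq t ht).unique ((hasDerivAt_const t 0).congr_of_eventuallyEq ?_)
      filter_upwards [Ioi_mem_nhds ht] with u hu using p_eq_zero u (le_of_lt hu)
    exact ⟨0, le_rfl, hp, hpq, fun t ht => q_nonneg t ht.1, fun t ht => (q_eq_zero t ht).le⟩
  · exact ⟨b, hb, hp, hpq, q_nonneg, q_nonpos⟩

namespace IsUnimodal

lemma integral_abs_of_le (h : IsUnimodal p q b) {t : ℝ} (ht : 0 ≤ t) (htb : t ≤ b) :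
    IntervalIntegrable q volume 0 t ∧ ∫ u in (0 : ℝ)..t, |q u| = p t - p 0 :=
  integral_abs_deriv_of_nonneg ht (h.continuousOn.mono Icc_subset_Ici_self)
    (fun u hu => h.hasDerivAt u hu.1) fun u hu => h.deriv_nonneg u ⟨hu.1, hu.2.trans_le htb⟩

lemma integral_abs_of_ge (h : IsUnimodal p q b) {t : ℝ} (hbt : b ≤ t) :
    IntervalIntegrable q volume 0 t ∧ ∫ u in (0 : ℝ)..t, |q u| = 2 * p b - p 0 - p t := by
  obtain ⟨left_integrable, left_eq⟩ := h.integral_abs_of_le h.nonneg le_rfl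
  obtain ⟨right_integrable, right_eq⟩ := integral_abs_deriv_of_nonpos hbt
    (h.continuousOn.mono (Icc_subset_Ici_self.trans (Ici_subset_Ici.2 h.nonneg)))
    (fun u hu => h.hasDerivAt u (h.nonneg.trans_lt hu.1)) fun u hu => h.deriv_nonpos u hu.1
  refine ⟨left_integrable.trans right_integrable, ?_⟩
  rw [← intervalIntegral.integral_add_adjacent_intervals left_integrable.abs right_integrable.abs,
    left_eq, right_eq]
  ring

lemma tendsto_integral_abs (h : IsUnimodal p q b) {l : ℝ} (hl : Tendsto p atTop (nhds l)) :
    Tendsto (fun t => ∫ u in (0 : ℝ)..t, |q u|) atTop (nhds (2 * p b - p 0 - l)) := by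
  refine (tendsto_const_nhds.sub hl).congr' ?_
  filter_upwards [Ici_mem_atTop b] with t ht using (h.integral_abs_of_ge ht).2.symm

lemma integrableOn (h : IsUnimodal p q b) {l : ℝ} (hl : Tendsto p atTop (nhds l)) :
    IntegrableOn q (Ioi 0) := by
  refine integrableOn_Ioi_of_intervalIntegral_norm_tendsto _ 0 (fun t => ?_) tendsto_id
    (h.tendsto_integral_abs hl)
  exact (h.integral_abs_of_ge (le_max_left b t)).1.1.mono_set
    (Ioc_subset_Ioc_right (le_max_right b t))

lemma integral_abs_Ioi (h : IsUnimodal p q b) {l : ℝ} (hl : Tendsto p atTop (nhds l)) :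
    ∫ t in Ioi 0, |q t| = 2 * p b - p 0 - l :=
  tendsto_nhds_unique
    (intervalIntegral_tendsto_integral_Ioi 0 (h.integrableOn hl).abs tendsto_id)
    (h.tendsto_integral_abs hl)

end IsUnimodal

end Unimodal

/-! ## Logarithmic complete monotonicity of perturbations of `1/x` -/

/-- The difference quotient `w(t)/t` at the origin of a function with `w 0 = 0`. Its junk value
`0` at `t = 0` is the right one when moreover `w' 0 = 0`. -/
noncomputable def meanSlope (w : ℝ → ℝ) (t : ℝ) : ℝ :=
  1 / t * w t

/-- The derivative of `meanSlope w` away from `0`, where `w'` is the derivative of `w`. -/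
noncomputable def meanSlopeDeriv (w w' : ℝ → ℝ) (t : ℝ) : ℝ :=
  (t * w' t - w t) / t ^ 2

/-- The bounds and the shape of `w`, with derivatives `w'` and `w''`, under which the Laplace
transform of `1 + ε w(t)/t` is logarithmically completely monotonic for `|ε| ≤ 1`. -/
structure IsSigmoidal (w w' w'' : ℝ → ℝ) : Prop where
  hasDerivAt : ∀ t, HasDerivAt w (w' t) t
  hasDerivAt_deriv : ∀ t, HasDerivAt w' (w'' t) t
  map_zero : w 0 = 0
  deriv_zero : w' 0 = 0
  deriv_nonneg : ∀ t, 0 < t → 0 ≤ w' t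
  deriv_le_one : ∀ t, 0 < t → w' t ≤ 1
  le_one : ∀ t, 0 < t → w t ≤ 1
  lt_half : ∀ t, 0 < t → w t < t / 2
  crossesDownward : CrossesDownward w''

namespace IsSigmoidal

variable {w w' w'' : ℝ → ℝ} {b x ε : ℝ}

lemma continuous (h : IsSigmoidal w w' w'') : Continuous w :=
  continuous_iff_continuousAt.2 fun t => (h.hasDerivAt t).continuousAt

lemma continuous_deriv (h : IsSigmoidal w w' w'') : Continuous w' :=
  continuous_iff_continuousAt.2 fun t => (h.hasDerivAt_deriv t).continuousAt

lemma nonneg (h : IsSigmoidal w w' w'') {t : ℝ} (ht : 0 ≤ t) : 0 ≤ w t := by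
  have monotone : MonotoneOn w (Ici 0) := by
    refine monotoneOn_of_hasDerivWithinAt_nonneg (f' := w') (convex_Ici 0)
      h.continuous.continuousOn (fun t _ => (h.hasDerivAt t).hasDerivWithinAt) fun t ht => ?_
    rw [interior_Ici] at ht
    exact h.deriv_nonneg t ht
  exact h.map_zero ▸ monotone self_mem_Ici ht ht

lemma meanSlope_nonneg (h : IsSigmoidal w w' w'') {t : ℝ} (ht : 0 ≤ t) : 0 ≤ meanSlope w t :=
  mul_nonneg (one_div_nonneg.2 ht) (h.nonneg ht)

lemma meanSlope_lt_half (h : IsSigmoidal w w' w'') {t : ℝ} (ht : 0 ≤ t) :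
    meanSlope w t < 1 / 2 := by
  rcases ht.eq_or_lt with rfl | ht
  · simp [meanSlope]
  · rw [meanSlope, one_div_mul_eq_div, div_lt_iff₀ ht]
    linarith [h.lt_half t ht]

lemma abs_meanSlope_le (h : IsSigmoidal w w' w'') {t : ℝ} (ht : 0 < t) :
    |meanSlope w t| ≤ 1 / 2 :=
  abs_le.2 ⟨by linarith [h.meanSlope_nonneg ht.le], (h.meanSlope_lt_half ht.le).le⟩

lemma continuous_meanSlope (h : IsSigmoidal w w' w'') : Continuous (meanSlope w) := by
  have meanSlope_eq_dslope : meanSlope w = dslope w 0 := by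
    ext t
    rcases eq_or_ne t 0 with rfl | ht
    · rw [dslope_same, (h.hasDerivAt 0).deriv, h.deriv_zero, meanSlope, div_zero, zero_mul]
    · rw [dslope_of_ne _ ht, slope_def_field, h.map_zero, sub_zero, sub_zero, meanSlope,
        one_div_mul_eq_div]
  rw [meanSlope_eq_dslope, ← continuousOn_univ]
  exact (continuousOn_dslope univ_mem).2
    ⟨h.continuous.continuousOn, (h.hasDerivAt 0).differentiableAt⟩

lemma laplaceIntegrable_meanSlope (h : IsSigmoidal w w' w'') : LaplaceIntegrable (meanSlope w) :=
  .of_bounded h.continuous_meanSlope.aestronglyMeasurable fun _ => h.abs_meanSlope_le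

lemma hasDerivAt_meanSlope (h : IsSigmoidal w w' w'') {t : ℝ} (ht : 0 < t) :
    HasDerivAt (meanSlope w) (meanSlopeDeriv w w' t) t := by
  have quotient := (h.hasDerivAt t).fun_div (hasDerivAt_id t) ht.ne'
  simp only [id, mul_one] at quotient
  refine (quotient.congr_deriv ?_).congr_of_eventuallyEq ?_
  · rw [meanSlopeDeriv, mul_comm]
  · exact Eventually.of_forall fun u => one_div_mul_eq_div u (w u)

lemma mul_meanSlopeDeriv (w w' : ℝ → ℝ) {t : ℝ} (ht : 0 < t) :
    t * meanSlopeDeriv w w' t = w' t - meanSlope w t := by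
  rw [meanSlopeDeriv, meanSlope]
  field_simp

lemma crossesDownward_meanSlopeDeriv (h : IsSigmoidal w w' w'') :
    CrossesDownward (meanSlopeDeriv w w') := by
  have hasDerivAt_numerator (t : ℝ) : HasDerivAt (fun t => t * w' t - w t) (t * w'' t) t := by
    refine (((hasDerivAt_id t).mul (h.hasDerivAt_deriv t)).sub (h.hasDerivAt t)).congr_deriv ?_
    simp only [id]
    ring
  have numerator_continuous : Continuous fun t => t * w' t - w t :=
    continuous_iff_continuousAt.2 fun t => (hasDerivAt_numerator t).continuousAt
  have numerator_crosses : CrossesDownward fun t => t * w' t - w t :=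
    (h.crossesDownward.pos_mul fun _ ht => ht).of_hasDerivAt numerator_continuous.continuousOn
      (fun t _ => hasDerivAt_numerator t) (by simp [h.map_zero])
  have quotient_crosses :=
    numerator_crosses.pos_mul (c := fun t => (t ^ 2)⁻¹) fun t ht => by positivity
  simp only [inv_mul_eq_div] at quotient_crosses
  exact quotient_crosses

lemma tendsto_meanSlope_atTop (h : IsSigmoidal w w' w'') :
    Tendsto (meanSlope w) atTop (nhds 0) := by
  have one_div_tendsto : Tendsto (fun t : ℝ => 1 / t) atTop (nhds 0) :=
    tendsto_const_nhds.div_atTop tendsto_id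
  refine squeeze_zero' ?_ ?_ one_div_tendsto
  · filter_upwards [Ici_mem_atTop 0] with t ht using h.meanSlope_nonneg ht
  · filter_upwards [Ioi_mem_atTop 0] with t ht
    exact mul_le_of_le_one_right (one_div_nonneg.2 (le_of_lt ht)) (h.le_one t ht)

lemma exists_isUnimodal_meanSlope (h : IsSigmoidal w w' w'') :
    ∃ b, IsUnimodal (meanSlope w) (meanSlopeDeriv w w') b :=
  exists_isUnimodal h.continuous_meanSlope.continuousOn (by simp [meanSlope])
    (fun _ => h.hasDerivAt_meanSlope) h.crossesDownward_meanSlopeDeriv h.tendsto_meanSlope_atTop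

-- The left side equals `w' t` before the mode `b` and `2 * meanSlope w b - w' t` after it.
lemma abs_sub_meanSlope_add_integral_le (h : IsSigmoidal w w' w'')
    (hb : IsUnimodal (meanSlope w) (meanSlopeDeriv w w') b) {t : ℝ} (ht : 0 < t) :
    |w' t - meanSlope w t| + ∫ u in (0 : ℝ)..t, |meanSlopeDeriv w w' u| ≤ 1 := by
  have meanSlope_zero : meanSlope w 0 = 0 := by simp [meanSlope]
  rw [← mul_meanSlopeDeriv w w' ht]
  obtain ⟨htb, hq⟩ | ⟨hbt, hq⟩ : (t ≤ b ∧ 0 ≤ meanSlopeDeriv w w' t) ∨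
      (b ≤ t ∧ meanSlopeDeriv w w' t ≤ 0) := by
    rcases lt_trichotomy t b with htb | rfl | hbt
    · exact .inl ⟨htb.le, hb.deriv_nonneg t ⟨ht, htb⟩⟩
    · exact (le_total 0 _).imp (⟨le_rfl, ·⟩) (⟨le_rfl, ·⟩)
    · exact .inr ⟨hbt.le, hb.deriv_nonpos t hbt⟩
  · rw [abs_of_nonneg (mul_nonneg ht.le hq), mul_meanSlopeDeriv w w' ht,
      (hb.integral_abs_of_le ht.le htb).2, meanSlope_zero]
    linarith [h.deriv_le_one t ht]
  · rw [abs_of_nonpos (mul_nonpos_of_nonneg_of_nonpos ht.le hq), mul_meanSlopeDeriv w w' ht,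
      (hb.integral_abs_of_ge hbt).2, meanSlope_zero]
    linarith [h.deriv_nonneg t ht, h.meanSlope_lt_half hb.nonneg]

lemma integral_abs_meanSlopeDeriv_lt_one (h : IsSigmoidal w w' w'')
    (hb : IsUnimodal (meanSlope w) (meanSlopeDeriv w w') b) :
    ∫ t in Ioi 0, |meanSlopeDeriv w w' t| < 1 := by
  have meanSlope_zero : meanSlope w 0 = 0 := by simp [meanSlope]
  rw [hb.integral_abs_Ioi h.tendsto_meanSlope_atTop, meanSlope_zero]
  linarith [h.meanSlope_lt_half hb.nonneg]

lemma exists_resolvent (h : IsSigmoidal w w' w'') (hε : |ε| ≤ 1) :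
    IntegrableOn (meanSlopeDeriv w w') (Ioi 0) ∧ ∃ r : ℝ → ℝ, Continuous r ∧ (∀ t, |r t| ≤ 1) ∧
      ∀ t, 0 < t → r t + ∫ u in (0 : ℝ)..t, ε * meanSlopeDeriv w w' u * r (t - u) =
        w' t - meanSlope w t := by
  obtain ⟨b, hb⟩ := h.exists_isUnimodal_meanSlope
  have q_integrable := hb.integrableOn h.tendsto_meanSlope_atTop
  have abs_mul_le (t : ℝ) : |ε * meanSlopeDeriv w w' t| ≤ |meanSlopeDeriv w w' t| := by
    rw [abs_mul]
    exact mul_le_of_le_one_left (abs_nonneg _) hε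
  refine ⟨q_integrable, exists_bounded_volterra_solution (q_integrable.const_mul ε) ?_
    (h.continuous_deriv.sub h.continuous_meanSlope).continuousOn ?_ fun t ht => ?_⟩
  · exact (integral_mono (q_integrable.const_mul ε).abs q_integrable.abs abs_mul_le).trans_lt
      (h.integral_abs_meanSlopeDeriv_lt_one hb)
  · simp [meanSlope, h.deriv_zero]
  · rcases ht.eq_or_lt with rfl | ht
    · simp [meanSlope, h.deriv_zero]
    · refine le_trans ?_ (h.abs_sub_meanSlope_add_integral_le hb ht)
      have intervalIntegrable : IntervalIntegrable (meanSlopeDeriv w w') volume 0 t :=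
        (intervalIntegrable_iff_integrableOn_Ioc_of_le ht.le).2
          (q_integrable.mono_set Ioc_subset_Ioi_self)
      rw [one_mul]
      refine add_le_add_right ?_ _
      exact intervalIntegral.integral_mono ht.le (intervalIntegrable.const_mul ε).abs
        intervalIntegrable.abs abs_mul_le

lemma laplaceIntegrable_deriv (h : IsSigmoidal w w' w'') : LaplaceIntegrable w' :=
  .of_bounded h.continuous_deriv.aestronglyMeasurable fun t ht =>
    abs_le.2 ⟨by linarith [h.deriv_nonneg t ht], h.deriv_le_one t ht⟩

lemma abs_le_one (h : IsSigmoidal w w' w'') {t : ℝ} (ht : 0 < t) : |w t| ≤ 1 :=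
  abs_le.2 ⟨by linarith [h.nonneg ht.le], h.le_one t ht⟩

lemma laplaceTransform_deriv (h : IsSigmoidal w w' w'') (hx : 0 < x) :
    LaplaceTransform w' x = x * LaplaceTransform w x := by
  rw [laplaceTransform_of_hasDerivAt h.continuous.continuousWithinAt (fun t _ => h.hasDerivAt t)
    (fun _ => h.abs_le_one) h.laplaceIntegrable_deriv hx, h.map_zero, sub_zero]

lemma laplaceTransform_meanSlopeDeriv (h : IsSigmoidal w w' w'')
    (hq : LaplaceIntegrable (meanSlopeDeriv w w')) (hx : 0 < x) :
    LaplaceTransform (meanSlopeDeriv w w') x = x * LaplaceTransform (meanSlope w) x := by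
  rw [laplaceTransform_of_hasDerivAt h.continuous_meanSlope.continuousWithinAt
    (fun _ => h.hasDerivAt_meanSlope) (fun _ => h.abs_meanSlope_le) hq hx, meanSlope, div_zero,
    zero_mul, sub_zero]

lemma laplaceTransform_resolvent (h : IsSigmoidal w w' w'') {r : ℝ → ℝ}
    (hq : LaplaceIntegrable (meanSlopeDeriv w w')) (hr : LaplaceIntegrable r)
    (hr_eq : ∀ t, 0 < t → r t + ∫ u in (0 : ℝ)..t, ε * meanSlopeDeriv w w' u * r (t - u) =
      w' t - meanSlope w t) (hx : 0 < x) :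
    LaplaceTransform r x * (1 + ε * (x * LaplaceTransform (meanSlope w) x)) =
      x * LaplaceTransform w x - LaplaceTransform (meanSlope w) x := by
  have transform_eq : LaplaceTransform
      (fun t => ∫ u in (0 : ℝ)..t, ε * meanSlopeDeriv w w' u * r (t - u)) x =
      LaplaceTransform (fun t => w' t - meanSlope w t - r t) x :=
    congrFun (laplaceTransform_congr fun t ht => by rw [← hr_eq t ht, add_sub_cancel_left]) x
  rw [laplaceTransform_convolution (hq.const_mul ε) hr hx, laplaceTransform_const_mul,
    h.laplaceTransform_meanSlopeDeriv hq hx,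
    (h.laplaceIntegrable_deriv.sub h.laplaceIntegrable_meanSlope).laplaceTransform_sub hr hx,
    h.laplaceIntegrable_deriv.laplaceTransform_sub h.laplaceIntegrable_meanSlope hx,
    h.laplaceTransform_deriv hx] at transform_eq
  linear_combination transform_eq

lemma laplaceTransform_id_mul (h : IsSigmoidal w w' w'') (hx : 0 < x) :
    LaplaceTransform (fun t => t * (1 + ε * meanSlope w t)) x =
      1 / x ^ 2 + ε * LaplaceTransform w x := by
  have w_laplaceIntegrable : LaplaceIntegrable w :=
    .of_bounded h.continuous.aestronglyMeasurable fun _ => h.abs_le_one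
  have eq_add (t : ℝ) (ht : 0 < t) : t * (1 + ε * meanSlope w t) = t + ε * w t := by
    rw [meanSlope]
    field_simp
  rw [laplaceTransform_congr eq_add, LaplaceIntegrable.id.laplaceTransform_add
    (w_laplaceIntegrable.const_mul ε) hx, laplaceTransform_id hx, laplaceTransform_const_mul]

-- The resolvent `r` is chosen so that `L(t τ) = L(1 + ε r) * L τ`, and `1 + ε r ≥ 0`.
theorem logCompletelyMonotonic (h : IsSigmoidal w w' w'') (hε : |ε| ≤ 1) :
    LogCompletelyMonotonic (LaplaceTransform fun t => 1 + ε * meanSlope w t) := by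
  obtain ⟨q_integrable, r, r_continuous, r_abs_le, r_eq⟩ := h.exists_resolvent hε
  have r_laplaceIntegrable : LaplaceIntegrable r :=
    .of_bounded r_continuous.aestronglyMeasurable fun t _ => r_abs_le t
  have abs_mul_le {y C : ℝ} (hy : |y| ≤ C) : |ε * y| ≤ C := by
    rw [abs_mul]
    exact (mul_le_of_le_one_left (abs_nonneg y) hε).trans hy
  refine LaplaceIntegrable.logCompletelyMonotonic (κ := fun t => 1 + ε * r t)
    ((LaplaceIntegrable.of_const 1).add (h.laplaceIntegrable_meanSlope.const_mul ε))
    (fun t ht => ?_) ((LaplaceIntegrable.of_const 1).add (r_laplaceIntegrable.const_mul ε))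
    (fun t _ => ?_) fun x hx => ?_
  · linarith [(abs_le.1 (abs_mul_le (h.abs_meanSlope_le ht))).1]
  · linarith [(abs_le.1 (abs_mul_le (r_abs_le t))).1]
  · have resolvent := h.laplaceTransform_resolvent (.of_integrableOn q_integrable)
      r_laplaceIntegrable r_eq hx
    rw [h.laplaceTransform_id_mul hx, laplaceTransform_one_add_const_mul ε r_laplaceIntegrable hx,
      laplaceTransform_one_add_const_mul ε h.laplaceIntegrable_meanSlope hx]
    field_simp
    linear_combination -ε * x * resolvent

end IsSigmoidal

/-! ## The hyperbolic defect -/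

/-- The function `w(t) = 1 - cosh (a t) / cosh t`, so that the theorem concerns
`1 ± meanSlope w` with `a = 1 - ν`. -/
noncomputable def coshDefect (a t : ℝ) : ℝ :=
  1 - Real.cosh (a * t) / Real.cosh t

/-- The derivative of `coshDefect a`. -/
noncomputable def coshDefectDeriv (a t : ℝ) : ℝ :=
  (Real.cosh (a * t) * Real.sinh t - a * Real.sinh (a * t) * Real.cosh t) / Real.cosh t ^ 2

/-- The second derivative of `coshDefect a` up to the positive factor `cosh (a t) / cosh t ^ 3`,
which makes it antitone. -/
noncomputable def coshDefectCurvature (a t : ℝ) : ℝ :=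
  (1 - a ^ 2) * Real.cosh t ^ 2
    + 2 * a * (Real.sinh (a * t) / Real.cosh (a * t)) * (Real.sinh t * Real.cosh t)
    - 2 * Real.sinh t ^ 2

section CoshDefect

variable {a t : ℝ}

lemma hasDerivAt_cosh_mul (a t : ℝ) :
    HasDerivAt (fun t => Real.cosh (a * t)) (a * Real.sinh (a * t)) t :=
  ((hasDerivAt_id t).const_mul a).cosh.congr_deriv (by simp only [id, mul_one, mul_comm])

lemma hasDerivAt_sinh_mul (a t : ℝ) :
    HasDerivAt (fun t => Real.sinh (a * t)) (a * Real.cosh (a * t)) t :=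
  ((hasDerivAt_id t).const_mul a).sinh.congr_deriv (by simp only [id, mul_one, mul_comm])

lemma hasDerivAt_coshDefect (a t : ℝ) : HasDerivAt (coshDefect a) (coshDefectDeriv a t) t := by
  refine (((hasDerivAt_cosh_mul a t).fun_div (Real.hasDerivAt_cosh t)
    (Real.cosh_pos t).ne').const_sub 1).congr_deriv ?_
  rw [coshDefectDeriv, ← neg_div]
  ring

lemma hasDerivAt_coshDefectDeriv (a t : ℝ) : HasDerivAt (coshDefectDeriv a)
    (Real.cosh (a * t) / Real.cosh t ^ 3 * coshDefectCurvature a t) t := by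
  have cosh_ne := (Real.cosh_pos t).ne'
  have cosh_mul_ne := (Real.cosh_pos (a * t)).ne'
  refine ((((hasDerivAt_cosh_mul a t).fun_mul (Real.hasDerivAt_sinh t)).fun_sub
    (((hasDerivAt_sinh_mul a t).const_mul a).fun_mul (Real.hasDerivAt_cosh t))).fun_div
      ((Real.hasDerivAt_cosh t).fun_pow 2) (pow_ne_zero 2 cosh_ne)).congr_deriv ?_
  rw [coshDefectCurvature]
  field_simp
  ring

lemma hasDerivAt_coshDefectCurvature (a t : ℝ) : HasDerivAt (coshDefectCurvature a)
    (-(2 * (Real.sinh t - a * (Real.sinh (a * t) / Real.cosh (a * t)) * Real.cosh t) *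
      (Real.cosh t - a * (Real.sinh (a * t) / Real.cosh (a * t)) * Real.sinh t))) t := by
  have cosh_mul_ne := (Real.cosh_pos (a * t)).ne'
  have quotient := (hasDerivAt_sinh_mul a t).fun_div (hasDerivAt_cosh_mul a t) cosh_mul_ne
  have product := (Real.hasDerivAt_sinh t).fun_mul (Real.hasDerivAt_cosh t)
  refine ((((Real.hasDerivAt_cosh t).fun_pow 2).const_mul (1 - a ^ 2)).fun_add
    ((quotient.const_mul (2 * a)).fun_mul product)).fun_sub
      (((Real.hasDerivAt_sinh t).fun_pow 2).const_mul 2) |>.congr_deriv ?_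
  field_simp
  ring

lemma sinh_mul_cosh_le (ha : a ≤ 1) (ht : 0 < t) :
    Real.sinh (a * t) * Real.cosh t ≤ Real.cosh (a * t) * Real.sinh t := by
  have sinh_sub_nonneg : 0 ≤ Real.sinh (t - a * t) := Real.sinh_nonneg_iff.2 (by nlinarith)
  rw [Real.sinh_sub] at sinh_sub_nonneg
  linarith

lemma antitoneOn_coshDefectCurvature (ha0 : 0 ≤ a) (ha1 : a ≤ 1) :
    AntitoneOn (coshDefectCurvature a) (Ioi 0) := by
  refine antitoneOn_of_hasDerivWithinAt_nonpos (convex_Ioi 0)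
    (fun t _ => (hasDerivAt_coshDefectCurvature a t).continuousAt.continuousWithinAt)
    (fun t _ => (hasDerivAt_coshDefectCurvature a t).hasDerivWithinAt) fun t ht => ?_
  rw [interior_Ioi, mem_Ioi] at ht
  have sinh_nonneg := Real.sinh_nonneg_iff.2 ht.le
  set T := Real.sinh (a * t) / Real.cosh (a * t) with hT
  have T_nonneg : 0 ≤ T :=
    div_nonneg (Real.sinh_nonneg_iff.2 (by positivity)) (Real.cosh_pos _).le
  have T_le_one : T ≤ 1 := (div_le_one (Real.cosh_pos _)).2 (Real.sinh_lt_cosh _).le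
  have T_mul_cosh_le : T * Real.cosh t ≤ Real.sinh t := by
    rw [hT, div_mul_eq_mul_div, div_le_iff₀ (Real.cosh_pos _), mul_comm (Real.sinh t)]
    exact sinh_mul_cosh_le ha1 ht
  have sinh_factor_nonneg : 0 ≤ Real.sinh t - a * T * Real.cosh t := by
    nlinarith [mul_nonneg T_nonneg (Real.cosh_pos t).le]
  have cosh_factor_nonneg : 0 ≤ Real.cosh t - a * T * Real.sinh t := by
    nlinarith [mul_le_one₀ ha1 T_nonneg T_le_one, Real.sinh_lt_cosh t]
  exact neg_nonpos.2 (by positivity)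

lemma coshDefectDeriv_nonneg (ha0 : 0 ≤ a) (ha1 : a ≤ 1) (ht : 0 < t) :
    0 ≤ coshDefectDeriv a t := by
  refine div_nonneg (sub_nonneg.2 (le_trans ?_ (sinh_mul_cosh_le ha1 ht))) (sq_nonneg _)
  have sinh_mul_nonneg : 0 ≤ Real.sinh (a * t) := Real.sinh_nonneg_iff.2 (by positivity)
  exact mul_le_mul_of_nonneg_right (mul_le_of_le_one_left sinh_mul_nonneg ha1)
    (Real.cosh_pos t).le

lemma cosh_mul_le (ha0 : 0 ≤ a) (ha1 : a ≤ 1) (t : ℝ) : Real.cosh (a * t) ≤ Real.cosh t := by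
  rw [Real.cosh_le_cosh, abs_mul, abs_of_nonneg ha0]
  exact mul_le_of_le_one_left (abs_nonneg t) ha1

lemma coshDefectDeriv_le_one (ha0 : 0 ≤ a) (ha1 : a ≤ 1) (ht : 0 < t) :
    coshDefectDeriv a t ≤ 1 := by
  have sinh_mul_nonneg : 0 ≤ Real.sinh (a * t) := Real.sinh_nonneg_iff.2 (by positivity)
  have cosh_pos := Real.cosh_pos t
  rw [coshDefectDeriv, div_le_one (by positivity)]
  calc Real.cosh (a * t) * Real.sinh t - a * Real.sinh (a * t) * Real.cosh t
      ≤ Real.cosh (a * t) * Real.sinh t :=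
        sub_le_self _ (mul_nonneg (mul_nonneg ha0 sinh_mul_nonneg) cosh_pos.le)
    _ ≤ Real.cosh t * Real.cosh t :=
        mul_le_mul (cosh_mul_le ha0 ha1 t) (Real.sinh_lt_cosh t).le
          (Real.sinh_nonneg_iff.2 ht.le) cosh_pos.le
    _ = Real.cosh t ^ 2 := (sq _).symm

lemma sinh_le_mul_cosh (ht : 0 < t) : Real.sinh t ≤ t * Real.cosh t := by
  obtain ⟨s, hs, slope_eq⟩ := exists_hasDerivAt_eq_slope Real.sinh Real.cosh ht
    Real.continuous_sinh.continuousOn fun u _ => Real.hasDerivAt_sinh u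
  rw [Real.sinh_zero, sub_zero, sub_zero, eq_div_iff ht.ne', mul_comm] at slope_eq
  rw [← slope_eq]
  gcongr
  rw [Real.cosh_le_cosh, abs_of_pos hs.1, abs_of_pos ht]
  exact hs.2.le

lemma two_mul_cosh_sub_one_lt (ht : 0 < t) : 2 * (Real.cosh t - 1) < t * Real.cosh t := by
  obtain ⟨h, rfl⟩ : ∃ h, t = 2 * h := ⟨t / 2, by ring⟩
  have h_pos : 0 < h := by linarith
  have sinh_nonneg := Real.sinh_nonneg_iff.2 h_pos.le
  calc 2 * (Real.cosh (2 * h) - 1)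
      = 4 * Real.sinh h * Real.sinh h := by
        rw [Real.cosh_two_mul, Real.cosh_sq]
        ring
    _ ≤ 4 * Real.sinh h * (h * Real.cosh h) := by
        exact mul_le_mul_of_nonneg_left (sinh_le_mul_cosh h_pos)
          (mul_nonneg four_pos.le sinh_nonneg)
    _ = 2 * h * Real.sinh (2 * h) := by
        rw [Real.sinh_two_mul]
        ring
    _ < 2 * h * Real.cosh (2 * h) := by
        gcongr
        exact Real.sinh_lt_cosh _

lemma coshDefect_lt_half (a : ℝ) (ht : 0 < t) : coshDefect a t < t / 2 := by
  have cosh_pos := Real.cosh_pos t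
  rw [coshDefect, sub_lt_iff_lt_add, ← sub_lt_iff_lt_add', lt_div_iff₀ cosh_pos]
  linarith [two_mul_cosh_sub_one_lt ht, Real.one_le_cosh (a * t)]

lemma isSigmoidal_coshDefect (ha0 : 0 ≤ a) (ha1 : a ≤ 1) :
    IsSigmoidal (coshDefect a) (coshDefectDeriv a)
      fun t => Real.cosh (a * t) / Real.cosh t ^ 3 * coshDefectCurvature a t where
  hasDerivAt := hasDerivAt_coshDefect a
  hasDerivAt_deriv := hasDerivAt_coshDefectDeriv a
  map_zero := by simp [coshDefect]
  deriv_zero := by simp [coshDefectDeriv]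
  deriv_nonneg _ := coshDefectDeriv_nonneg ha0 ha1
  deriv_le_one _ := coshDefectDeriv_le_one ha0 ha1
  le_one t _ := sub_le_self 1 (div_pos (Real.cosh_pos _) (Real.cosh_pos t)).le
  lt_half _ := coshDefect_lt_half a
  crossesDownward :=
    (CrossesDownward.of_antitoneOn (antitoneOn_coshDefectCurvature ha0 ha1)).pos_mul fun t _ =>
      div_pos (Real.cosh_pos _) (pow_pos (Real.cosh_pos t) 3)

lemma coshDefect_abs (a : ℝ) : coshDefect |a| = coshDefect a := by
  ext t
  rw [coshDefect, coshDefect, ← Real.cosh_abs, abs_mul, abs_abs, ← abs_mul, Real.cosh_abs]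

lemma exists_isSigmoidal_coshDefect_one_sub {ν : ℝ} (hν0 : 0 ≤ ν) (hν2 : ν ≤ 2) :
    ∃ w' w'', IsSigmoidal (coshDefect (1 - ν)) w' w'' :=
  ⟨_, _, coshDefect_abs (1 - ν) ▸ isSigmoidal_coshDefect (abs_nonneg _)
    (abs_le.2 ⟨by linarith, by linarith⟩)⟩

end CoshDefect

/-! ## Generalized Stieltjes functions -/

section Stieltjes

variable {d : ℝ → ℝ} {lam x : ℝ}

lemma densityMeasure_Iio_zero (g : ℝ → ℝ) : densityMeasure g (Iio 0) = 0 := by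
  refine withDensity_absolutelyContinuous _ _ ?_
  rw [Measure.restrict_apply measurableSet_Iio, Iio_inter_Ioi, Ioo_self, measure_empty]

lemma integral_stieltjesKernel (hlam : 0 < lam) (hx : 0 < x) {s : ℝ} (hs : 0 < s) :
    ∫ t in Ioi 0, Real.exp (-x * t) * (t ^ (lam - 1) * (Real.exp (-t * s) * d s)) =
      (x + s) ^ (-lam) * (Real.Gamma lam * d s) := by
  have transform := laplaceTransform_rpow hlam (add_pos hx hs)
  rw [← mul_assoc, mul_comm _ (Real.Gamma lam), ← transform, LaplaceTransform,
    ← integral_mul_const]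
  refine integral_congr_ae (Eventually.of_forall fun t => ?_)
  have exp_split : Real.exp (-(x + s) * t) = Real.exp (-x * t) * Real.exp (-t * s) := by
    rw [← Real.exp_add]
    ring_nf
  simp only [exp_split]
  ring

lemma integrable_stieltjesKernel (hd : LaplaceIntegrable d) (hd0 : ∀ s, 0 < s → 0 ≤ d s)
    (h : LaplaceIntegrable fun t => t ^ (lam - 1) * LaplaceTransform d t) (hx : 0 < x) :
    Integrable (fun z : ℝ × ℝ =>
        Real.exp (-x * z.1) * (z.1 ^ (lam - 1) * (Real.exp (-z.1 * z.2) * d z.2)))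
      ((volume.restrict (Ioi 0)).prod (volume.restrict (Ioi 0))) := by
  have d_snd_measurable : AEStronglyMeasurable (fun z : ℝ × ℝ => d z.2)
      ((volume.restrict (Ioi 0)).prod (volume.restrict (Ioi 0))) :=
    hd.aemeasurable.aestronglyMeasurable.comp_snd
  refine (integrable_prod_iff ?_).2 ⟨?_, ?_⟩
  · have factor_measurable : Measurable fun z : ℝ × ℝ => z.1 ^ (lam - 1) := by fun_prop
    exact AEStronglyMeasurable.mul (by fun_prop)
      (factor_measurable.aestronglyMeasurable.mul (.mul (by fun_prop) d_snd_measurable))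
  · filter_upwards [ae_restrict_mem measurableSet_Ioi] with t ht
    exact ((hd t ht).const_mul _).const_mul _
  · refine (h x hx).congr_fun (fun t ht => ?_) measurableSet_Ioi
    simp only [LaplaceTransform, ← integral_const_mul]
    refine setIntegral_congr_fun measurableSet_Ioi fun s hs => (Real.norm_of_nonneg ?_).symm
    have := hd0 s hs
    have := Real.rpow_nonneg (le_of_lt ht) (lam - 1)
    positivity

theorem isGenStieltjes_laplaceTransform (hlam : 0 < lam) (hd : LaplaceIntegrable d)
    (hd0 : ∀ s, 0 < s → 0 ≤ d s)
    (h : LaplaceIntegrable fun t => t ^ (lam - 1) * LaplaceTransform d t) :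
    IsGenStieltjes lam (LaplaceTransform fun t => t ^ (lam - 1) * LaplaceTransform d t) := by
  have density_nonneg (s : ℝ) (hs : 0 < s) : 0 ≤ Real.Gamma lam * d s :=
    mul_nonneg (Real.Gamma_pos_of_pos hlam).le (hd0 s hs)
  have density_measurable := (hd.const_mul (Real.Gamma lam)).aemeasurable
  refine ⟨densityMeasure fun s => Real.Gamma lam * d s, 0, le_rfl, densityMeasure_Iio_zero _,
    fun x hx => ?_⟩
  have kernel_integrable := integrable_stieltjesKernel hd hd0 h hx
  rw [integrable_densityMeasure density_measurable density_nonneg,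
    integral_densityMeasure density_measurable density_nonneg, add_zero]
  constructor
  · exact IntegrableOn.congr_fun kernel_integrable.integral_prod_right
      (fun s hs => integral_stieltjesKernel hlam hx hs) measurableSet_Ioi
  · calc LaplaceTransform (fun t => t ^ (lam - 1) * LaplaceTransform d t) x
        = ∫ t in Ioi 0, ∫ s in Ioi 0,
            Real.exp (-x * t) * (t ^ (lam - 1) * (Real.exp (-t * s) * d s)) := by
          simp only [LaplaceTransform, integral_const_mul]
      _ = ∫ s in Ioi 0, ∫ t in Ioi 0,
            Real.exp (-x * t) * (t ^ (lam - 1) * (Real.exp (-t * s) * d s)) :=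
          integral_integral_swap kernel_integrable
      _ = ∫ s in Ioi 0, (x + s) ^ (-lam) * (Real.Gamma lam * d s) :=
          setIntegral_congr_fun measurableSet_Ioi fun s hs =>
            integral_stieltjesKernel hlam hx hs

end Stieltjes

/-! ## The density of the Stieltjes measure -/

/-- The extension of `z` from `[0, c)` to a function `m` with `m (s + c) = -m s`. -/
noncomputable def antiperiodicExtension (c : ℝ) (z : ℝ → ℝ) (s : ℝ) : ℝ :=
  (-1) ^ ⌊s / c⌋ * z (c * Int.fract (s / c))

section AntiperiodicExtension

variable {c C s t : ℝ} {z : ℝ → ℝ}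

lemma antiperiodic_antiperiodicExtension (hc : c ≠ 0) (z : ℝ → ℝ) :
    Function.Antiperiodic (antiperiodicExtension c z) c := fun s => by
  rw [antiperiodicExtension, antiperiodicExtension, add_div, div_self hc, Int.floor_add_one,
    Int.fract_add_one, zpow_add_one₀ (by norm_num), mul_neg_one, neg_mul]

lemma antiperiodicExtension_of_mem_Ico (hs : s ∈ Ico 0 c) : antiperiodicExtension c z s = z s := by
  have c_pos : 0 < c := hs.1.trans_lt hs.2
  have mem_Ico : s / c ∈ Ico (0 : ℝ) 1 := ⟨div_nonneg hs.1 c_pos.le, (div_lt_one c_pos).2 hs.2⟩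
  rw [antiperiodicExtension, Int.floor_eq_zero_iff.2 mem_Ico, Int.fract_eq_self.2 mem_Ico,
    zpow_zero, one_mul, mul_div_cancel₀ s c_pos.ne']

lemma measurable_antiperiodicExtension (c : ℝ) (hz : Measurable z) :
    Measurable (antiperiodicExtension c z) := by
  have sign_measurable : Measurable fun n : ℤ => (-1 : ℝ) ^ n := measurable_from_top
  exact (sign_measurable.comp (Int.measurable_floor.comp (by fun_prop))).mul
    (hz.comp ((measurable_fract.comp (by fun_prop)).const_mul c))

lemma abs_antiperiodicExtension_le (hC : ∀ s, |z s| ≤ C) (s : ℝ) :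
    |antiperiodicExtension c z s| ≤ C := by
  rw [antiperiodicExtension, abs_mul, abs_zpow, abs_neg, abs_one, one_zpow, one_mul]
  exact hC _

lemma antiperiodicExtension_add_delay (hc : 0 < c) (hz0 : z 0 = 0)
    (hz : ∀ s, c ≤ s → z s = 0) (hs : 0 < s) :
    antiperiodicExtension c z s + delay c (antiperiodicExtension c z) s = z s := by
  rcases lt_trichotomy s c with hsc | rfl | hcs
  · rw [delay_of_le hsc.le, antiperiodicExtension_of_mem_Ico ⟨hs.le, hsc⟩, add_zero]
  · rw [delay_of_le le_rfl, hz s le_rfl, antiperiodicExtension, div_self hs.ne', Int.fract_one,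
      mul_zero, hz0, mul_zero, add_zero]
  · rw [delay_of_lt hcs, hz s hcs.le, (antiperiodic_antiperiodicExtension hc.ne' z).sub_eq,
      add_neg_cancel]

lemma LaplaceIntegrable.antiperiodicExtension (c : ℝ) (hz : Measurable z) (hC : ∀ s, |z s| ≤ C) :
    LaplaceIntegrable (antiperiodicExtension c z) :=
  .of_bounded (measurable_antiperiodicExtension c hz).aestronglyMeasurable
    fun s _ => abs_antiperiodicExtension_le hC s

lemma laplaceTransform_antiperiodicExtension (hc : 0 < c) (hz : Measurable z)
    (hC : ∀ s, |z s| ≤ C) (hz0 : z 0 = 0) (hzc : ∀ s, c ≤ s → z s = 0) (ht : 0 < t) :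
    LaplaceTransform (antiperiodicExtension c z) t * (1 + Real.exp (-c * t)) =
      LaplaceTransform z t := by
  have m_laplaceIntegrable := LaplaceIntegrable.antiperiodicExtension c hz hC
  rw [← laplaceTransform_congr fun s hs => antiperiodicExtension_add_delay hc hz0 hzc hs,
    m_laplaceIntegrable.laplaceTransform_add (m_laplaceIntegrable.delay c) ht,
    laplaceTransform_delay hc.le]
  ring

end AntiperiodicExtension

/-- The piecewise linear function supported on `[0, 2]` with slope `1` on an initial interval of
length `min ν (2 - ν)`, slope `-1` on a final one of the same length, and constant in between. -/
noncomputable def trapezoid (ν s : ℝ) : ℝ :=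
  max s 0 - max (s - ν) 0 - max (s - (2 - ν)) 0 + max (s - 2) 0

section Trapezoid

variable {ν t : ℝ}

lemma measurable_trapezoid (ν : ℝ) : Measurable (trapezoid ν) := by
  unfold trapezoid
  fun_prop

lemma abs_trapezoid_le_one (hν0 : 0 ≤ ν) (hν2 : ν ≤ 2) (s : ℝ) : |trapezoid ν s| ≤ 1 := by
  unfold trapezoid
  grind

lemma trapezoid_zero (hν0 : 0 ≤ ν) (hν2 : ν ≤ 2) : trapezoid ν 0 = 0 := by
  unfold trapezoid
  grind

lemma trapezoid_of_two_le (hν0 : 0 ≤ ν) (hν2 : ν ≤ 2) {s : ℝ} (hs : 2 ≤ s) :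
    trapezoid ν s = 0 := by
  unfold trapezoid
  grind

lemma delay_id_eq_max (α s : ℝ) : delay α (fun u => u) s = max (s - α) 0 := by
  rcases le_or_gt s α with h | h
  · rw [delay_of_le h, max_eq_right (sub_nonpos.2 h)]
  · rw [delay_of_lt h, max_eq_left (sub_pos.2 h).le]

lemma laplaceTransform_trapezoid (hν0 : 0 ≤ ν) (hν2 : ν ≤ 2) (ht : 0 < t) :
    LaplaceTransform (trapezoid ν) t =
      (1 - Real.exp (-ν * t) - Real.exp (-(2 - ν) * t) + Real.exp (-2 * t)) / t ^ 2 := by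
  have ramp (α : ℝ) := LaplaceIntegrable.id.delay α
  have trapezoid_eq (s : ℝ) (hs : 0 < s) : trapezoid ν s = s - delay ν (fun u => u) s
      - delay (2 - ν) (fun u => u) s + delay 2 (fun u => u) s := by
    simp only [trapezoid, delay_id_eq_max, max_eq_left hs.le]
  rw [laplaceTransform_congr trapezoid_eq,
    ((LaplaceIntegrable.id.sub (ramp ν)).sub (ramp (2 - ν))).laplaceTransform_add (ramp 2) ht,
    (LaplaceIntegrable.id.sub (ramp ν)).laplaceTransform_sub (ramp (2 - ν)) ht,
    LaplaceIntegrable.id.laplaceTransform_sub (ramp ν) ht, laplaceTransform_delay hν0,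
    laplaceTransform_delay (sub_nonneg.2 hν2), laplaceTransform_delay two_pos.le,
    laplaceTransform_id ht]
  ring

end Trapezoid

lemma two_mul_exp_neg_mul_cosh (t u : ℝ) :
    2 * Real.exp (-t) * Real.cosh u = Real.exp (u - t) + Real.exp (-u - t) := by
  rw [Real.cosh_eq, sub_eq_add_neg, sub_eq_add_neg, Real.exp_add, Real.exp_add]
  ring

lemma coshDefect_mul_one_add_exp (ν t : ℝ) : coshDefect (1 - ν) t * (1 + Real.exp (-2 * t)) =
    1 - Real.exp (-ν * t) - Real.exp (-(2 - ν) * t) + Real.exp (-2 * t) := by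
  have denominator : 1 + Real.exp (-2 * t) = 2 * Real.exp (-t) * Real.cosh t := by
    rw [two_mul_exp_neg_mul_cosh, sub_self, Real.exp_zero]
    ring_nf
  have numerator : Real.exp (-ν * t) + Real.exp (-(2 - ν) * t) =
      2 * Real.exp (-t) * Real.cosh ((1 - ν) * t) := by
    rw [two_mul_exp_neg_mul_cosh]
    ring_nf
  have quotient : Real.cosh ((1 - ν) * t) / Real.cosh t * (2 * Real.exp (-t) * Real.cosh t) =
      2 * Real.exp (-t) * Real.cosh ((1 - ν) * t) := by
    have cosh_ne := (Real.cosh_pos t).ne'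
    field_simp
  rw [coshDefect, sub_mul, one_mul, denominator, quotient, ← numerator, ← denominator]
  ring

lemma laplaceTransform_antiperiodicExtension_trapezoid {ν t : ℝ} (hν0 : 0 ≤ ν) (hν2 : ν ≤ 2)
    (ht : 0 < t) :
    LaplaceTransform (antiperiodicExtension 2 (trapezoid ν)) t = coshDefect (1 - ν) t / t ^ 2 := by
  have one_add_exp_ne : 1 + Real.exp (-2 * t) ≠ 0 := by positivity
  rw [← mul_left_inj' one_add_exp_ne, laplaceTransform_antiperiodicExtension two_pos
    (measurable_trapezoid ν) (abs_trapezoid_le_one hν0 hν2) (trapezoid_zero hν0 hν2)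
    (fun _ => trapezoid_of_two_le hν0 hν2) ht, laplaceTransform_trapezoid hν0 hν2 ht,
    div_mul_eq_mul_div, coshDefect_mul_one_add_exp]

theorem isGenStieltjes_one_add_meanSlope_coshDefect {ν ε : ℝ} (hν0 : 0 ≤ ν) (hν2 : ν ≤ 2)
    (hε : |ε| ≤ 1) :
    IsGenStieltjes 2 (LaplaceTransform fun t => 1 + ε * meanSlope (coshDefect (1 - ν)) t) := by
  obtain ⟨_, _, sigmoidal⟩ := exists_isSigmoidal_coshDefect_one_sub hν0 hν2
  set m := antiperiodicExtension 2 (trapezoid ν)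
  have m_laplaceIntegrable : LaplaceIntegrable m :=
    .antiperiodicExtension 2 (measurable_trapezoid ν) (abs_trapezoid_le_one hν0 hν2)
  have density_nonneg (s : ℝ) (_ : 0 < s) : 0 ≤ 1 + ε * m s := by
    have abs_le_one : |ε * m s| ≤ 1 := by
      rw [abs_mul]
      exact mul_le_one₀ hε (abs_nonneg _)
        (abs_antiperiodicExtension_le (abs_trapezoid_le_one hν0 hν2) s)
    linarith [(abs_le.1 abs_le_one).1]
  have eq_transform (t : ℝ) (ht : 0 < t) : 1 + ε * meanSlope (coshDefect (1 - ν)) t =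
      t ^ ((2 : ℝ) - 1) * LaplaceTransform (fun s => 1 + ε * m s) t := by
    rw [laplaceTransform_one_add_const_mul ε m_laplaceIntegrable ht,
      laplaceTransform_antiperiodicExtension_trapezoid hν0 hν2 ht, meanSlope,
      show (2 : ℝ) - 1 = 1 by norm_num, Real.rpow_one]
    field_simp
  rw [laplaceTransform_congr eq_transform]
  exact isGenStieltjes_laplaceTransform two_pos
    ((LaplaceIntegrable.of_const 1).add (m_laplaceIntegrable.const_mul ε)) density_nonneg
    (((LaplaceIntegrable.of_const 1).add
      (sigmoidal.laplaceIntegrable_meanSlope.const_mul ε)).congr eq_transform)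

/-! ## The Laplace transform of the mean slope of the hyperbolic defect -/

section Modulation

variable {g : ℝ → ℝ} {α x : ℝ}

lemma LaplaceIntegrable.exp_mul (hα : 0 ≤ α) (hg : LaplaceIntegrable g) :
    LaplaceIntegrable fun t => Real.exp (-α * t) * g t := fun x hx => by
  refine (hg (x + α) (by linarith)).congr_fun (fun t _ => ?_) measurableSet_Ioi
  simp only [← mul_assoc, ← Real.exp_add, ← add_mul, neg_add]

lemma laplaceTransform_exp_mul (α : ℝ) (g : ℝ → ℝ) (x : ℝ) :
    LaplaceTransform (fun t => Real.exp (-α * t) * g t) x = LaplaceTransform g (x + α) := by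
  simp only [LaplaceTransform, ← mul_assoc, ← Real.exp_add, ← add_mul, neg_add]

lemma abs_one_sub_exp_div_le (hα : 0 ≤ α) {t : ℝ} (ht : 0 < t) :
    |(1 - Real.exp (-α * t)) / t| ≤ α := by
  have exp_le_one : Real.exp (-α * t) ≤ 1 := Real.exp_le_one_iff.2 (by nlinarith)
  rw [abs_of_nonneg (div_nonneg (sub_nonneg.2 exp_le_one) ht.le), div_le_iff₀ ht]
  linarith [Real.add_one_le_exp (-α * t)]

lemma laplaceIntegrable_one_sub_exp_div (hα : 0 ≤ α) :
    LaplaceIntegrable fun t => (1 - Real.exp (-α * t)) / t :=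
  have measurable : Measurable fun t => (1 - Real.exp (-α * t)) / t := by fun_prop
  .of_bounded measurable.aestronglyMeasurable fun _ => abs_one_sub_exp_div_le hα

lemma laplaceTransform_one_sub_exp_div (hα : 0 ≤ α) (hx : 0 < x) :
    LaplaceTransform (fun t => (1 - Real.exp (-α * t)) / t) x = Real.log ((x + α) / x) := by
  have exp_neg_continuous : Continuous fun y : ℝ => Real.exp (-y) := by fun_prop
  have integrand_eq (t : ℝ) : t⁻¹ * (Real.exp (-(x * t)) - Real.exp (-((x + α) * t))) =
      Real.exp (-x * t) * ((1 - Real.exp (-α * t)) / t) := by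
    have exp_split : Real.exp (-((x + α) * t)) = Real.exp (-x * t) * Real.exp (-α * t) := by
      rw [← Real.exp_add]
      ring_nf
    rw [exp_split, ← neg_mul]
    ring
  have frullani := Frullani.integral_Ioi_eq (f := fun y => Real.exp (-y)) (a := x) (b := x + α)
    (L := 1) (R := 0) (exp_neg_continuous.locallyIntegrable.locallyIntegrableOn _) hx (by linarith)
    ?_ Real.tendsto_exp_neg_atTop_nhds_zero ?_
  · simpa only [LaplaceTransform, smul_eq_mul, integrand_eq, sub_zero, mul_one] using frullani
  · exact (exp_neg_continuous.tendsto' 0 1 (by simp)).mono_left nhdsWithin_le_nhds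
  · simpa only [smul_eq_mul, integrand_eq] using laplaceIntegrable_one_sub_exp_div hα x hx

end Modulation

lemma laplaceTransform_meanSlope_coshDefect_add {ν x : ℝ} (hν0 : 0 ≤ ν) (hν2 : ν ≤ 2)
    (hx : 0 < x) :
    LaplaceTransform (meanSlope (coshDefect (1 - ν))) x +
      LaplaceTransform (meanSlope (coshDefect (1 - ν))) (x + 2) =
      Real.log ((x + ν) / x) - Real.log ((x + 2) / (x + 2 - ν)) := by
  obtain ⟨_, _, sigmoidal⟩ := exists_isSigmoidal_coshDefect_one_sub hν0 hν2
  have p_laplaceIntegrable := sigmoidal.laplaceIntegrable_meanSlope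
  have φ_laplaceIntegrable := laplaceIntegrable_one_sub_exp_div hν0
  have hν2' : 0 ≤ 2 - ν := sub_nonneg.2 hν2
  have defect_eq (t : ℝ) (_ : 0 < t) : meanSlope (coshDefect (1 - ν)) t
      + Real.exp (-2 * t) * meanSlope (coshDefect (1 - ν)) t =
      (1 - Real.exp (-ν * t)) / t
        - Real.exp (-(2 - ν) * t) * ((1 - Real.exp (-ν * t)) / t) := by
    have exp_split : Real.exp (-2 * t) = Real.exp (-(2 - ν) * t) * Real.exp (-ν * t) := by
      rw [← Real.exp_add]
      ring_nf
    have key := coshDefect_mul_one_add_exp ν t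
    rw [meanSlope]
    linear_combination (1 / t) * key + (1 / t) * exp_split
  rw [← laplaceTransform_exp_mul 2, ← p_laplaceIntegrable.laplaceTransform_add
    (p_laplaceIntegrable.exp_mul two_pos.le) hx, laplaceTransform_congr defect_eq,
    φ_laplaceIntegrable.laplaceTransform_sub (φ_laplaceIntegrable.exp_mul hν2') hx,
    laplaceTransform_exp_mul, laplaceTransform_one_sub_exp_div hν0 hx,
    laplaceTransform_one_sub_exp_div hν0 (by linarith)]
  ring_nf

/-- The ratio `Γ(y + 1/2) / Γ(y)`, a substitute for `√y`. -/
noncomputable def gammaRatio (y : ℝ) : ℝ :=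
  Real.Gamma (y + 1 / 2) / Real.Gamma y

section GammaRatio

variable {y : ℝ}

lemma gammaRatio_pos (hy : 0 < y) : 0 < gammaRatio y :=
  div_pos (Real.Gamma_pos_of_pos (by linarith)) (Real.Gamma_pos_of_pos hy)

lemma gammaRatio_mul_gammaRatio_add_half (hy : 0 < y) :
    gammaRatio y * gammaRatio (y + 1 / 2) = y := by
  have Gamma_ne := (Real.Gamma_pos_of_pos hy).ne'
  have Gamma_add_half_ne := (Real.Gamma_pos_of_pos (show 0 < y + 1 / 2 by linarith)).ne'
  rw [gammaRatio, gammaRatio, add_assoc, add_halves, Real.Gamma_add_one hy.ne',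
    div_mul_div_cancel₀' Gamma_add_half_ne, mul_div_cancel_right₀ _ Gamma_ne]

lemma gammaRatio_sq_le (hy : 0 < y) : gammaRatio y ^ 2 ≤ y := by
  have Gamma_pos := Real.Gamma_pos_of_pos hy
  have log_convexity : Real.Gamma (y + 1 / 2) ≤ √(Real.Gamma y) * √(Real.Gamma (y + 1)) := by
    have h := Real.Gamma_mul_add_mul_le_rpow_Gamma_mul_rpow_Gamma hy
      (show 0 < y + 1 by linarith) one_half_pos one_half_pos (add_halves 1)
    rw [← Real.sqrt_eq_rpow, ← Real.sqrt_eq_rpow] at h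
    convert h using 2
    ring
  rw [gammaRatio, div_pow, div_le_iff₀ (by positivity)]
  calc Real.Gamma (y + 1 / 2) ^ 2
      ≤ (√(Real.Gamma y) * √(Real.Gamma (y + 1))) ^ 2 :=
        pow_le_pow_left₀ (Real.Gamma_pos_of_pos (by linarith)).le log_convexity 2
    _ = y * Real.Gamma y ^ 2 := by
        rw [mul_pow, Real.sq_sqrt Gamma_pos.le,
          Real.sq_sqrt (Real.Gamma_pos_of_pos (by linarith)).le, Real.Gamma_add_one hy.ne']
        ring

lemma sq_le_add_half_mul_gammaRatio_sq (hy : 0 < y) :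
    y ^ 2 ≤ (y + 1 / 2) * gammaRatio y ^ 2 :=
  calc y ^ 2 = gammaRatio (y + 1 / 2) ^ 2 * gammaRatio y ^ 2 := by
        rw [← mul_pow, mul_comm, gammaRatio_mul_gammaRatio_add_half hy]
    _ ≤ (y + 1 / 2) * gammaRatio y ^ 2 := by
        gcongr
        exact gammaRatio_sq_le (by linarith)

lemma tendsto_add_const_div_atTop (c : ℝ) :
    Tendsto (fun y : ℝ => (y + c) / y) atTop (nhds 1) := by
  have h : Tendsto (fun y : ℝ => 1 + c / y) atTop (nhds (1 + 0)) :=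
    tendsto_const_nhds.add (tendsto_const_nhds.div_atTop tendsto_id)
  rw [add_zero] at h
  refine h.congr' ?_
  filter_upwards [Ioi_mem_atTop 0] with y hy
  rw [add_div, div_self (ne_of_gt hy)]

lemma tendsto_gammaRatio_sq_div : Tendsto (fun y => gammaRatio y ^ 2 / y) atTop (nhds 1) := by
  have lower_bound_tendsto : Tendsto (fun y : ℝ => ((y + 1 / 2) / y)⁻¹) atTop (nhds 1) := by
    simpa using (tendsto_add_const_div_atTop (1 / 2)).inv₀ one_ne_zero
  refine tendsto_of_tendsto_of_tendsto_of_le_of_le' lower_bound_tendsto tendsto_const_nhds ?_ ?_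
  · filter_upwards [Ioi_mem_atTop 0] with y hy
    rw [mem_Ioi] at hy
    rw [inv_div, div_le_div_iff₀ (by linarith) hy]
    linarith [sq_le_add_half_mul_gammaRatio_sq hy]
  · filter_upwards [Ioi_mem_atTop 0] with y hy
    exact (div_le_one hy).2 (gammaRatio_sq_le hy)

end GammaRatio

/-- The argument of the logarithm in the closed form of the Laplace transform, with the four Gamma
values grouped into two `gammaRatio`s. -/
noncomputable def gammaQuotient (ν x : ℝ) : ℝ :=
  4 * gammaRatio ((x - ν) / 4 + 1 / 2) * gammaRatio ((x + ν) / 4) / x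

section GammaQuotient

variable {ν x : ℝ}

lemma gammaQuotient_eq (ν x : ℝ) : gammaQuotient ν x =
    4 * Real.Gamma ((x - ν) / 4 + 1) * Real.Gamma ((x + ν) / 4 + 1 / 2) /
      (x * Real.Gamma ((x - ν) / 4 + 1 / 2) * Real.Gamma ((x + ν) / 4)) := by
  rw [gammaQuotient, gammaRatio, gammaRatio, add_assoc, add_halves]
  ring

lemma gammaQuotient_pos (hν0 : 0 ≤ ν) (hν2 : ν ≤ 2) (hx : 0 < x) : 0 < gammaQuotient ν x := by
  have first_pos := gammaRatio_pos (show 0 < (x - ν) / 4 + 1 / 2 by linarith)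
  have second_pos := gammaRatio_pos (show 0 < (x + ν) / 4 by linarith)
  unfold gammaQuotient
  positivity

lemma gammaQuotient_mul_gammaQuotient_add_two (hν0 : 0 ≤ ν) (hν2 : ν ≤ 2) (hx : 0 < x) :
    gammaQuotient ν x * gammaQuotient ν (x + 2) =
      (x + ν) / x / ((x + 2) / (x + 2 - ν)) := by
  have first := gammaRatio_mul_gammaRatio_add_half (show 0 < (x - ν) / 4 + 1 / 2 by linarith)
  have second := gammaRatio_mul_gammaRatio_add_half (show 0 < (x + ν) / 4 by linarith)
  have first_shift : (x + 2 - ν) / 4 + 1 / 2 = (x - ν) / 4 + 1 / 2 + 1 / 2 := by ring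
  have second_shift : (x + 2 + ν) / 4 = (x + ν) / 4 + 1 / 2 := by ring
  rw [gammaQuotient, gammaQuotient, first_shift, second_shift, div_mul_div_comm, div_div_div_eq]
  congr 1
  linear_combination 16 * gammaRatio ((x + ν) / 4) * gammaRatio ((x + ν) / 4 + 1 / 2) * first +
    16 * ((x - ν) / 4 + 1 / 2) * second

lemma tendsto_log_gammaQuotient_atTop (ν : ℝ) :
    Tendsto (fun x => Real.log (gammaQuotient ν x)) atTop (nhds 0) := by
  have first_arg : Tendsto (fun x => (x - ν) / 4 + 1 / 2) atTop atTop :=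
    tendsto_atTop_add_const_right _ _
      ((tendsto_atTop_add_const_right _ (-ν) tendsto_id).atTop_div_const four_pos)
  have second_arg : Tendsto (fun x => (x + ν) / 4) atTop atTop :=
    (tendsto_atTop_add_const_right _ ν tendsto_id).atTop_div_const four_pos
  have product_tendsto := (((tendsto_gammaRatio_sq_div.comp first_arg).mul
    (tendsto_gammaRatio_sq_div.comp second_arg)).mul (tendsto_add_const_div_atTop (2 - ν))).mul
      (tendsto_add_const_div_atTop ν)
  have sq_tendsto : Tendsto (fun x => gammaQuotient ν x ^ 2) atTop (nhds 1) := by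
    rw [mul_one, mul_one, mul_one] at product_tendsto
    refine product_tendsto.congr' ?_
    filter_upwards [first_arg.eventually_ne_atTop 0, second_arg.eventually_ne_atTop 0]
      with x first_ne second_ne
    simp only [Function.comp_apply, gammaQuotient]
    set A := (x - ν) / 4 + 1 / 2 with hA
    set B := (x + ν) / 4 with hB
    have first_eq : x + (2 - ν) = 4 * A := by linarith
    have second_eq : x + ν = 4 * B := by linarith
    rw [first_eq, second_eq]
    field_simp
  have log_tendsto := (sq_tendsto.log one_ne_zero).const_mul (1 / 2)
  rw [Real.log_one, mul_zero] at log_tendsto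
  refine log_tendsto.congr fun x => ?_
  rw [Real.log_pow]
  push_cast
  ring

end GammaQuotient

lemma eq_zero_of_add_eq_neg_of_tendsto_zero {D : ℝ → ℝ} {c : ℝ} (hc : 0 < c)
    (hD : ∀ x, 0 < x → D (x + c) = -D x) (hD0 : Tendsto D atTop (nhds 0)) {x : ℝ} (hx : 0 < x) :
    D x = 0 := by
  have abs_shift (n : ℕ) : |D (x + n * c)| = |D x| := by
    induction n with
    | zero => rw [Nat.cast_zero, zero_mul, add_zero]
    | succ n ih => rw [← ih, Nat.cast_succ, add_one_mul, ← add_assoc, hD _ (by positivity), abs_neg]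
  have shift_tendsto : Tendsto (fun n : ℕ => x + n * c) atTop atTop :=
    tendsto_atTop_add_const_left _ _ (tendsto_natCast_atTop_atTop.atTop_mul_const hc)
  have abs_tendsto := (hD0.comp shift_tendsto).abs
  simp only [Function.comp_def, abs_shift, abs_zero] at abs_tendsto
  exact abs_eq_zero.1 (tendsto_nhds_unique tendsto_const_nhds abs_tendsto)

theorem laplaceTransform_meanSlope_coshDefect {ν x : ℝ} (hν0 : 0 ≤ ν) (hν2 : ν ≤ 2) (hx : 0 < x) :
    LaplaceTransform (meanSlope (coshDefect (1 - ν))) x = Real.log (gammaQuotient ν x) := by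
  obtain ⟨_, _, sigmoidal⟩ := exists_isSigmoidal_coshDefect_one_sub hν0 hν2
  have difference_tendsto :=
    (tendsto_laplaceTransform_atTop fun _ => sigmoidal.abs_meanSlope_le).sub
      (tendsto_log_gammaQuotient_atTop ν)
  rw [sub_zero] at difference_tendsto
  refine sub_eq_zero.1
    (eq_zero_of_add_eq_neg_of_tendsto_zero two_pos (fun x hx => ?_) difference_tendsto hx)
  have transform_add := laplaceTransform_meanSlope_coshDefect_add hν0 hν2 hx
  have log_add : Real.log (gammaQuotient ν x) + Real.log (gammaQuotient ν (x + 2)) =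
      Real.log ((x + ν) / x) - Real.log ((x + 2) / (x + 2 - ν)) := by
    have numerator_pos : 0 < x + ν := by linarith
    have denominator_pos : 0 < x + 2 - ν := by linarith
    rw [← Real.log_mul (gammaQuotient_pos hν0 hν2 hx).ne'
      (gammaQuotient_pos hν0 hν2 (by linarith)).ne',
      gammaQuotient_mul_gammaQuotient_add_two hν0 hν2 hx,
      Real.log_div (div_pos numerator_pos hx).ne' (div_pos (by linarith) denominator_pos).ne']
  linarith

theorem stmt12_general (ν : ℝ) (hν0 : 0 ≤ ν) (hν2 : ν ≤ 2) (ε : ℝ) (hε : |ε| ≤ 1) :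
    IsGenStieltjes 2 (LaplaceTransform
      (fun x => 1 + ε * ((1 / x) * (1 - Real.cosh ((1 - ν) * x) / Real.cosh x)))) ∧
    LogCompletelyMonotonic (LaplaceTransform
      (fun x => 1 + ε * ((1 / x) * (1 - Real.cosh ((1 - ν) * x) / Real.cosh x)))) ∧
    ∀ x : ℝ, 0 < x →
      LaplaceTransform
          (fun x => 1 + ε * ((1 / x) * (1 - Real.cosh ((1 - ν) * x) / Real.cosh x))) x
        = 1 / x + ε * Real.log
            (4 * Real.Gamma ((x - ν) / 4 + 1) * Real.Gamma ((x + ν) / 4 + 1 / 2) /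
              (x * Real.Gamma ((x - ν) / 4 + 1 / 2) * Real.Gamma ((x + ν) / 4))) := by
  obtain ⟨_, _, sigmoidal⟩ := exists_isSigmoidal_coshDefect_one_sub hν0 hν2
  refine ⟨isGenStieltjes_one_add_meanSlope_coshDefect hν0 hν2 hε,
    sigmoidal.logCompletelyMonotonic hε, fun x hx => ?_⟩
  rw [← gammaQuotient_eq, ← laplaceTransform_meanSlope_coshDefect hν0 hν2 hx]
  exact laplaceTransform_one_add_const_mul ε sigmoidal.laplaceIntegrable_meanSlope hx

/-- Theorem: for `0 ≤ ν ≤ 1` and either sign `ε = ±1`, the function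
`τ(x) = 1 ± (1/x)(1 - cosh((1-ν)x)/cosh x)` has Laplace transform a generalized Stieltjes
function of order 2 (hence `τ` is infinitely divisible), and
`L(τ)(x) = 1/x ± log(4Γ((x-ν)/4+1)Γ((x+ν)/4+1/2)/(xΓ((x-ν)/4+1/2)Γ((x+ν)/4)))`. -/
theorem stmt12 (ν : ℝ) (hν0 : 0 ≤ ν) (hν1 : ν ≤ 1) (ε : ℝ) (hε : ε = 1 ∨ ε = -1) :
    IsGenStieltjes 2 (LaplaceTransform
      (fun x => 1 + ε * ((1 / x) * (1 - Real.cosh ((1 - ν) * x) / Real.cosh x)))) ∧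
    LogCompletelyMonotonic (LaplaceTransform
      (fun x => 1 + ε * ((1 / x) * (1 - Real.cosh ((1 - ν) * x) / Real.cosh x)))) ∧
    ∀ x : ℝ, 0 < x →
      LaplaceTransform
          (fun x => 1 + ε * ((1 / x) * (1 - Real.cosh ((1 - ν) * x) / Real.cosh x))) x
        = 1 / x + ε * Real.log
            (4 * Real.Gamma ((x - ν) / 4 + 1) * Real.Gamma ((x + ν) / 4 + 1 / 2) /
              (x * Real.Gamma ((x - ν) / 4 + 1 / 2) * Real.Gamma ((x + ν) / 4))) := by
  exact stmt12_general ν hν0 (hν1.trans one_le_two) ε (by rcases hε with rfl | rfl <;> simp)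
end

section
/- Let {a_n}_{n≥1} be reals with 0 < a_1 ≤ a_2 ≤ … and Σ_{n=1}^∞ 1/a_n² < ∞, and let f be the entire function f(z) = e^{αz+β} Π_{n=1}^∞ (1 + z/a_n) e^{-z/a_n} (an entire function of genus 1 with only negative zeros and f(0) > 0). Let a, b > 0 and c = a + b. Then the function x ↦ log( f(x+a) f(x+b) / ( f(x) f(x+c) ) ) on (0,∞) is a generalized Stieltjes function of order 2, with representing measure having density (χ_{(0,a)} * χ_{(0,b)} * μ)(t) where μ = Σ_{n=1}^∞ ε_{a_n} is the sum of unit point masses at the a_n; that is, log( f(x+a) f(x+b) / ( f(x) f(x+c) ) ) = ∫_0^∞ (χ_{(0,a)} * χ_{(0,b)} * μ)(t) (x+t)^{-2} dt for all x > 0. -/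
open MeasureTheory Filter Set

/-- The convolution `(χ_{(0,a)} * χ_{(0,b)})(t)` of indicator functions of intervals. -/
noncomputable def indConv (a b t : ℝ) : ℝ :=
  ∫ s : ℝ, (Set.Ioo (0:ℝ) a).indicator (fun _ => (1:ℝ)) s *
    (Set.Ioo (0:ℝ) b).indicator (fun _ => (1:ℝ)) (t - s)

/-!
The affine exponent and the factors `exp (-x / aₙ)` contribute only affine terms to `log f`, and
affine functions are annihilated by the mixed second difference
`-Δ_p Δ_q F (x) = F (x + p) + F (x + q) - F x - F (x + p + q)`. Hence
`log (f (x + p) f (x + q) / (f x f (x + p + q)))` is the sum over `n` of the mixed second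
differences of `log` at `x + aₙ`. By the fundamental theorem of calculus each of them equals
`∫_{(0,p)} ∫_{(0,q)} (x + aₙ + s + u)⁻² du ds`, which is the integral of `(x + t)⁻²` against the
convolution of Lebesgue measure on `(0,p)` and `(0,q)` with the point mass at `aₙ`. All terms
are nonnegative, so Tonelli's theorem allows summing over `n` under the integral.
-/

open scoped ENNReal

/-- The mixed second difference `-Δ_p Δ_q F`, with the sign that makes it nonnegative for
concave `F`. For `F = log ∘ f` it is the logarithm of the ratio
`f (x + p) f (x + q) / (f x f (x + p + q))`. -/
def negMixedDiff (p q : ℝ) (F : ℝ → ℝ) (x : ℝ) : ℝ :=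
  F (x + p) + F (x + q) - F x - F (x + (p + q))

/-- The Weierstrass primary factor of genus one vanishing at `-a`, restricted to the real line. -/
noncomputable def primaryFactor (a x : ℝ) : ℝ :=
  (1 + x / a) * Real.exp (-x / a)

/-- The density `χ_{(0,p)} * χ_{(0,q)} * μ`, where `μ` is the sum of the unit point masses
at the `a i`. -/
noncomputable def indConvSum {ι : Type*} (p q : ℝ) (a : ι → ℝ) (t : ℝ) : ℝ :=
  ∑' i, indConv p q (t - a i)

section MixedDifference

variable {p q x : ℝ}

lemma log_div_eq_negMixedDiff {f : ℝ → ℝ} (hp : 0 ≤ p) (hq : 0 ≤ q)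
    (hf : ∀ y, x ≤ y → f y ≠ 0) :
    Real.log (f (x + p) * f (x + q) / (f x * f (x + (p + q)))) =
      negMixedDiff p q (fun y => Real.log (f y)) x := by
  have hfx := hf x le_rfl
  have hfp := hf (x + p) (by linarith)
  have hfq := hf (x + q) (by linarith)
  have hfpq := hf (x + (p + q)) (by linarith)
  rw [Real.log_div (mul_ne_zero hfp hfq) (mul_ne_zero hfx hfpq), Real.log_mul hfp hfq,
    Real.log_mul hfx hfpq, negMixedDiff]
  ring

lemma hasSum_negMixedDiff {ι : Type*} {F : ι → ℝ → ℝ} {G : ℝ → ℝ} (hp : 0 ≤ p) (hq : 0 ≤ q)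
    (hF : ∀ y, x ≤ y → HasSum (fun i => F i y) (G y)) :
    HasSum (fun i => negMixedDiff p q (F i) x) (negMixedDiff p q G x) :=
  (((hF _ (by linarith)).add (hF _ (by linarith))).sub (hF _ le_rfl)).sub (hF _ (by linarith))

lemma negMixedDiff_log_nonneg (hp : 0 ≤ p) (hq : 0 ≤ q) (hx : 0 < x) :
    0 ≤ negMixedDiff p q Real.log x := by
  have hmul : x * (x + (p + q)) ≤ (x + p) * (x + q) := by nlinarith [mul_nonneg hp hq]
  have hlog := Real.log_le_log (by positivity) hmul
  rw [Real.log_mul (by positivity) (by positivity),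
    Real.log_mul (by positivity) (by positivity)] at hlog
  rw [negMixedDiff]
  linarith

end MixedDifference

section PrimaryFactor

lemma abs_log_one_add_sub_self_le {y : ℝ} (hy : 0 ≤ y) : |Real.log (1 + y) - y| ≤ y ^ 2 := by
  have hupper : Real.log (1 + y) ≤ y := by
    linarith [Real.log_le_sub_one_of_pos (show 0 < 1 + y by positivity)]
  have hlower : y - y ^ 2 ≤ Real.log (1 + y) := by
    refine le_trans ?_ (Real.le_log_one_add_of_nonneg hy)
    rw [le_div_iff₀ (by positivity)]
    nlinarith [pow_nonneg hy 3, sq_nonneg y]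
  rw [abs_le]
  constructor <;> linarith [sq_nonneg y]

variable {a x : ℝ}

lemma primaryFactor_pos (ha : 0 < a) (hx : 0 ≤ x) : 0 < primaryFactor a x := by
  unfold primaryFactor
  positivity

lemma log_primaryFactor (ha : 0 < a) (hx : 0 ≤ x) :
    Real.log (primaryFactor a x) = Real.log (1 + x / a) - x / a := by
  rw [primaryFactor, Real.log_mul (by positivity) (Real.exp_ne_zero _), Real.log_exp]
  ring

lemma negMixedDiff_log_primaryFactor {p q : ℝ} (ha : 0 < a) (hx : 0 ≤ x) (hp : 0 ≤ p)
    (hq : 0 ≤ q) :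
    negMixedDiff p q (fun y => Real.log (primaryFactor a y)) x =
      negMixedDiff p q Real.log (x + a) := by
  have hlog : ∀ y, 0 ≤ y →
      Real.log (primaryFactor a y) = Real.log (y + a) - Real.log a - y / a := by
    intro y hy
    rw [log_primaryFactor ha hy, one_add_div ha.ne', add_comm a y,
      Real.log_div (by positivity) ha.ne']
  simp only [negMixedDiff]
  rw [hlog x hx, hlog (x + p) (by positivity), hlog (x + q) (by positivity),
    hlog (x + (p + q)) (by positivity), add_right_comm x p a, add_right_comm x q a,
    add_right_comm x (p + q) a]
  ring

end PrimaryFactor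

section CanonicalProduct

variable {ι : Type*} {a : ι → ℝ} {x : ℝ}

lemma summable_log_primaryFactor (ha : ∀ i, 0 < a i) (hsum : Summable fun i => 1 / a i ^ 2)
    (hx : 0 ≤ x) : Summable fun i => Real.log (primaryFactor (a i) x) := by
  refine Summable.of_norm_bounded (hsum.mul_left (x ^ 2)) fun i => ?_
  have hbound := abs_log_one_add_sub_self_le (div_nonneg hx (ha i).le)
  rwa [← log_primaryFactor (ha i) hx, ← Real.norm_eq_abs, div_pow, ← mul_one_div] at hbound

lemma tprod_primaryFactor_pos (ha : ∀ i, 0 < a i) (hsum : Summable fun i => 1 / a i ^ 2)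
    (hx : 0 ≤ x) : 0 < ∏' i, primaryFactor (a i) x := by
  rw [← Real.rexp_tsum_eq_tprod (fun i => primaryFactor_pos (ha i) hx)
    (summable_log_primaryFactor ha hsum hx)]
  exact Real.exp_pos _

lemma hasSum_log_primaryFactor (ha : ∀ i, 0 < a i) (hsum : Summable fun i => 1 / a i ^ 2)
    (hx : 0 ≤ x) :
    HasSum (fun i => Real.log (primaryFactor (a i) x))
      (Real.log (∏' i, primaryFactor (a i) x)) := by
  have hlog := summable_log_primaryFactor ha hsum hx
  rw [← Real.rexp_tsum_eq_tprod (fun i => primaryFactor_pos (ha i) hx) hlog, Real.log_exp]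
  exact hlog.hasSum

lemma hasSum_negMixedDiff_log_add {α β p q : ℝ} {f : ℝ → ℝ} (ha : ∀ i, 0 < a i)
    (hsum : Summable fun i => 1 / a i ^ 2)
    (hf : ∀ y, f y = Real.exp (α * y + β) * ∏' i, primaryFactor (a i) y)
    (hx : 0 ≤ x) (hp : 0 ≤ p) (hq : 0 ≤ q) :
    HasSum (fun i => negMixedDiff p q Real.log (x + a i))
      (Real.log (f (x + p) * f (x + q) / (f x * f (x + (p + q))))) := by
  have hprod : ∀ y, x ≤ y → ∏' i, primaryFactor (a i) y ≠ 0 := fun y hy =>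
    (tprod_primaryFactor_pos ha hsum (hx.trans hy)).ne'
  have hsplit : Real.log (f (x + p) * f (x + q) / (f x * f (x + (p + q)))) =
      negMixedDiff p q (fun y => Real.log (∏' i, primaryFactor (a i) y)) x := by
    have hlog : ∀ y, x ≤ y →
        Real.log (f y) = α * y + β + Real.log (∏' i, primaryFactor (a i) y) := fun y hy => by
      rw [hf, Real.log_mul (Real.exp_ne_zero _) (hprod y hy), Real.log_exp]
    rw [log_div_eq_negMixedDiff hp hq fun y hy => by
      rw [hf]; exact mul_ne_zero (Real.exp_ne_zero _) (hprod y hy)]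
    simp only [negMixedDiff]
    rw [hlog x le_rfl, hlog (x + p) (by linarith), hlog (x + q) (by linarith),
      hlog (x + (p + q)) (by linarith)]
    ring
  rw [hsplit]
  simp_rw [← fun i => negMixedDiff_log_primaryFactor (ha i) hx hp hq]
  exact hasSum_negMixedDiff hp hq fun y hy => hasSum_log_primaryFactor ha hsum (hx.trans hy)

end CanonicalProduct

section IndicatorConvolution

variable (p q : ℝ)

lemma indConv_nonneg (t : ℝ) : 0 ≤ indConv p q t :=
  integral_nonneg fun _ => mul_nonneg (indicator_nonneg (fun _ _ => zero_le_one) _)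
    (indicator_nonneg (fun _ _ => zero_le_one) _)

variable {p q} in
lemma indConv_of_nonpos {t : ℝ} (ht : t ≤ 0) : indConv p q t = 0 := by
  refine integral_eq_zero_of_ae (ae_of_all _ fun s => ?_)
  by_cases hs : s ∈ Ioo 0 p
  · have hts : t - s ∉ Ioo 0 q := fun h => by linarith [hs.1, h.1]
    simp [indicator_of_notMem hts]
  · simp [indicator_of_notMem hs]

lemma ofReal_indConv (t : ℝ) :
    ENNReal.ofReal (indConv p q t) =
      ((Ioo 0 p).indicator 1 ⋆ₗ (Ioo 0 q).indicator (1 : ℝ → ℝ≥0∞)) t := by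
  have hbounded : Integrable (fun s => (Ioo (0:ℝ) p).indicator (fun _ => (1:ℝ)) s *
      (Ioo (0:ℝ) q).indicator (fun _ => (1:ℝ)) (t - s)) := by
    have hmeas : Measurable fun s => (Ioo (0:ℝ) q).indicator (fun _ => (1:ℝ)) (t - s) :=
      (measurable_const.indicator measurableSet_Ioo).comp (measurable_const.sub measurable_id)
    refine Integrable.mul_bdd (c := 1) ?_ hmeas.aestronglyMeasurable (ae_of_all _ fun s => ?_)
    · exact (integrable_indicator_iff measurableSet_Ioo).2 (integrableOn_const (by simp))
    · exact (norm_indicator_le_norm_self _ _).trans_eq norm_one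
  rw [indConv, ofReal_integral_eq_lintegral_ofReal hbounded, lconvolution_def]
  · refine lintegral_congr fun s => ?_
    by_cases hs : s ∈ Ioo 0 p <;> by_cases hts : t - s ∈ Ioo 0 q <;>
      simp [indicator, hs, hts, neg_add_eq_sub]
  · exact ae_of_all _ fun s => mul_nonneg (indicator_nonneg (fun _ _ => zero_le_one) _)
      (indicator_nonneg (fun _ _ => zero_le_one) _)

lemma measurable_indConv : Measurable (indConv p q) := by
  have hmeas : Measurable fun t => (ENNReal.ofReal (indConv p q t)).toReal := by
    simp_rw [ofReal_indConv]
    exact (measurable_lconvolution _ (measurable_one.indicator measurableSet_Ioo)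
      (measurable_one.indicator measurableSet_Ioo)).ennreal_toReal
  simpa only [ENNReal.toReal_ofReal (indConv_nonneg p q _)] using hmeas

lemma withDensity_indConv :
    volume.withDensity (fun t => ENNReal.ofReal (indConv p q t)) =
      (volume.restrict (Ioo 0 p)).conv (volume.restrict (Ioo 0 q)) := by
  simp_rw [ofReal_indConv]
  rw [← withDensity_indicator_one measurableSet_Ioo, ← withDensity_indicator_one measurableSet_Ioo,
    conv_withDensity_eq_lconvolution (measurable_one.indicator measurableSet_Ioo)
      (measurable_one.indicator measurableSet_Ioo)]

lemma lintegral_indConv_mul {g : ℝ → ℝ≥0∞} (hg : Measurable g) :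
    ∫⁻ t, ENNReal.ofReal (indConv p q t) * g t =
      ∫⁻ s in Ioo 0 p, ∫⁻ u in Ioo 0 q, g (s + u) := by
  rw [← Measure.lintegral_conv hg, ← withDensity_indConv,
    lintegral_withDensity_eq_lintegral_mul _ (measurable_indConv p q).ennreal_ofReal hg]
  rfl

end IndicatorConvolution

section StieltjesKernel

lemma lintegral_Ioo_ofReal_deriv {F F' : ℝ → ℝ} {b c : ℝ} (hbc : b ≤ c)
    (hcont : ContinuousOn F (Icc b c)) (hderiv : ∀ u ∈ Ioo b c, HasDerivAt F (F' u) u)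
    (hnonneg : ∀ u ∈ Ioo b c, 0 ≤ F' u) :
    ∫⁻ u in Ioo b c, ENNReal.ofReal (F' u) = ENNReal.ofReal (F c - F b) := by
  have hint : IntegrableOn F' (Ioc b c) :=
    intervalIntegral.integrableOn_deriv_of_nonneg hcont hderiv hnonneg
  rw [← ofReal_integral_eq_lintegral_ofReal (hint.mono_set Ioo_subset_Ioc_self)
      (ae_restrict_of_forall_mem measurableSet_Ioo hnonneg),
    ← integral_Ioc_eq_integral_Ioo, ← intervalIntegral.integral_of_le hbc,
    intervalIntegral.integral_eq_sub_of_hasDerivAt_of_le hbc hcont hderiv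
      ((intervalIntegrable_iff_integrableOn_Ioc_of_le hbc).2 hint)]

variable {p q y : ℝ}

lemma lintegral_Ioo_one_div_sq (hy : 0 < y) (hq : 0 ≤ q) :
    ∫⁻ u in Ioo 0 q, ENNReal.ofReal (1 / (y + u) ^ 2) = ENNReal.ofReal (y⁻¹ - (y + q)⁻¹) := by
  have hderiv : ∀ u ∈ Icc 0 q, HasDerivAt (fun u => -(y + u)⁻¹) (1 / (y + u) ^ 2) u := by
    intro u hu
    have hne : y + u ≠ 0 := by linarith [hu.1]
    simpa [neg_div] using (((hasDerivAt_id u).const_add y).fun_inv hne).fun_neg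
  rw [lintegral_Ioo_ofReal_deriv hq (HasDerivAt.continuousOn hderiv)
    (fun u hu => hderiv u (Ioo_subset_Icc_self hu)) fun u _ => by positivity]
  congr 1
  ring

lemma lintegral_Ioo_inv_sub_inv (hy : 0 < y) (hp : 0 ≤ p) (hq : 0 ≤ q) :
    ∫⁻ s in Ioo 0 p, ENNReal.ofReal ((y + s)⁻¹ - (y + s + q)⁻¹) =
      ENNReal.ofReal (negMixedDiff p q Real.log y) := by
  have hderiv : ∀ s ∈ Icc 0 p, HasDerivAt (fun s => Real.log (y + s) - Real.log (y + s + q))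
      ((y + s)⁻¹ - (y + s + q)⁻¹) s := by
    intro s hs
    have hys : HasDerivAt (fun s => y + s) 1 s := (hasDerivAt_id s).const_add y
    simpa using (hys.log (by linarith [hs.1])).fun_sub
      ((hys.add_const q).log (by linarith [hs.1]))
  rw [lintegral_Ioo_ofReal_deriv hp (HasDerivAt.continuousOn hderiv)
    (fun s hs => hderiv s (Ioo_subset_Icc_self hs))
    fun s hs => sub_nonneg.2 (inv_anti₀ (by linarith [hs.1]) (by linarith))]
  congr 1
  rw [negMixedDiff, add_zero, add_assoc y p q]
  ring

lemma lintegral_indConv_div_sq (hy : 0 < y) (hp : 0 ≤ p) (hq : 0 ≤ q) :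
    ∫⁻ t, ENNReal.ofReal (indConv p q t / (y + t) ^ 2) =
      ENNReal.ofReal (negMixedDiff p q Real.log y) := by
  have hkernel : Measurable fun t : ℝ => ENNReal.ofReal (1 / (y + t) ^ 2) := by fun_prop
  simp_rw [← mul_one_div (indConv p q _), ENNReal.ofReal_mul (indConv_nonneg p q _)]
  rw [lintegral_indConv_mul p q hkernel, ← lintegral_Ioo_inv_sub_inv hy hp hq]
  refine setLIntegral_congr_fun measurableSet_Ioo fun s hs => ?_
  simp_rw [← add_assoc y s]
  exact lintegral_Ioo_one_div_sq (by linarith [hs.1]) hq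

lemma setLIntegral_indConv_sub_div_sq {x A : ℝ} (hA : 0 ≤ A) (hxA : 0 < x + A) (hp : 0 ≤ p)
    (hq : 0 ≤ q) :
    ∫⁻ t in Ioi 0, ENNReal.ofReal (indConv p q (t - A) / (x + t) ^ 2) =
      ENNReal.ofReal (negMixedDiff p q Real.log (x + A)) := by
  have hsupport : (fun t => ENNReal.ofReal (indConv p q (t - A) / (x + t) ^ 2)).support ⊆
      Ioi 0 := by
    refine Function.support_subset_iff'.2 fun t ht => ?_
    have htA : t - A ≤ 0 := by linarith [notMem_Ioi.1 ht]
    simp [indConv_of_nonpos htA]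
  rw [setLIntegral_eq_of_support_subset hsupport, ← lintegral_add_right_eq_self _ A,
    ← lintegral_indConv_div_sq hxA hp hq]
  simp_rw [add_sub_cancel_right, add_assoc, add_comm A]

end StieltjesKernel

section Density

variable {ι : Type*} {a : ι → ℝ} {p q x : ℝ}

lemma indConvSum_nonneg (t : ℝ) : 0 ≤ indConvSum p q a t :=
  tsum_nonneg fun _ => indConv_nonneg p q _

lemma finite_setOf_lt_of_summable_one_div_sq (ha : ∀ i, 0 < a i)
    (hsum : Summable fun i => 1 / a i ^ 2) (t : ℝ) : {i | a i < t}.Finite := by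
  rcases le_or_gt t 0 with ht | ht
  · exact finite_empty.subset fun i hi => (ha i).not_gt (hi.trans_le ht)
  · have hsmall := hsum.tendsto_cofinite_zero.eventually_lt_const
      (show 0 < 1 / t ^ 2 by positivity)
    refine (eventually_cofinite.1 hsmall).subset fun i hi => not_lt.2 ?_
    exact one_div_le_one_div_of_le (pow_pos (ha i) 2) (pow_le_pow_left₀ (ha i).le hi.le 2)

lemma summable_indConv_sub (ha : ∀ i, 0 < a i) (hsum : Summable fun i => 1 / a i ^ 2) (t : ℝ) :
    Summable fun i => indConv p q (t - a i) := by
  refine summable_of_hasFiniteSupport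
    ((finite_setOf_lt_of_summable_one_div_sq ha hsum t).subset fun i hi => ?_)
  by_contra hlt
  exact hi (indConv_of_nonpos (sub_nonpos.2 (not_lt.1 hlt)))

lemma countable_of_summable_one_div_sq (ha : ∀ i, 0 < a i)
    (hsum : Summable fun i => 1 / a i ^ 2) : Countable ι := by
  refine countable_univ_iff.1 (hsum.countable_support.mono fun i _ => ?_)
  exact (one_div_pos.2 (pow_pos (ha i) 2)).ne'

lemma ofReal_indConvSum (ha : ∀ i, 0 < a i) (hsum : Summable fun i => 1 / a i ^ 2) (t : ℝ) :
    ENNReal.ofReal (indConvSum p q a t) = ∑' i, ENNReal.ofReal (indConv p q (t - a i)) :=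
  ENNReal.ofReal_tsum_of_nonneg (fun _ => indConv_nonneg p q _) (summable_indConv_sub ha hsum t)

lemma measurable_indConvSum (ha : ∀ i, 0 < a i) (hsum : Summable fun i => 1 / a i ^ 2) :
    Measurable (indConvSum p q a) := by
  have := countable_of_summable_one_div_sq ha hsum
  have hmeas : Measurable fun t => (ENNReal.ofReal (indConvSum p q a t)).toReal := by
    simp_rw [ofReal_indConvSum ha hsum]
    exact (Measurable.tsum fun i => ((measurable_indConv p q).comp
      (measurable_id.sub_const (a i))).ennreal_ofReal).ennreal_toReal
  simpa only [ENNReal.toReal_ofReal (indConvSum_nonneg _)] using hmeas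

lemma setLIntegral_indConvSum_div_sq (ha : ∀ i, 0 < a i) (hsum : Summable fun i => 1 / a i ^ 2)
    (hx : 0 < x) (hp : 0 ≤ p) (hq : 0 ≤ q) :
    ∫⁻ t in Ioi 0, ENNReal.ofReal (indConvSum p q a t / (x + t) ^ 2) =
      ∑' i, ENNReal.ofReal (negMixedDiff p q Real.log (x + a i)) := by
  have := countable_of_summable_one_div_sq ha hsum
  simp_rw [← fun i => setLIntegral_indConv_sub_div_sq (ha i).le (add_pos hx (ha i)) hp hq]
  have hmeas : ∀ i, Measurable fun t => indConv p q (t - a i) / (x + t) ^ 2 := fun i =>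
    ((measurable_indConv p q).comp (measurable_id.sub_const (a i))).div (by fun_prop)
  rw [← lintegral_tsum fun i => (hmeas i).ennreal_ofReal.aemeasurable]
  refine lintegral_congr fun t => ?_
  rw [indConvSum, ← tsum_div_const]
  exact ENNReal.ofReal_tsum_of_nonneg (fun _ => div_nonneg (indConv_nonneg p q _) (sq_nonneg _))
    ((summable_indConv_sub ha hsum t).div_const _)

lemma integrableOn_indConvSum_div_sq_and_integral_eq {L : ℝ} (ha : ∀ i, 0 < a i)
    (hsum : Summable fun i => 1 / a i ^ 2) (hx : 0 < x) (hp : 0 ≤ p) (hq : 0 ≤ q)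
    (hL : HasSum (fun i => negMixedDiff p q Real.log (x + a i)) L) :
    IntegrableOn (fun t => indConvSum p q a t / (x + t) ^ 2) (Ioi 0) ∧
      ∫ t in Ioi 0, indConvSum p q a t / (x + t) ^ 2 = L := by
  have hterm : ∀ i, 0 ≤ negMixedDiff p q Real.log (x + a i) := fun i =>
    negMixedDiff_log_nonneg hp hq (add_pos hx (ha i))
  have hlint : ∫⁻ t in Ioi 0, ENNReal.ofReal (indConvSum p q a t / (x + t) ^ 2) =
      ENNReal.ofReal L := by
    rw [setLIntegral_indConvSum_div_sq ha hsum hx hp hq,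
      ← ENNReal.ofReal_tsum_of_nonneg hterm hL.summable, hL.tsum_eq]
  have hmeas : AEStronglyMeasurable (fun t => indConvSum p q a t / (x + t) ^ 2)
      (volume.restrict (Ioi 0)) :=
    ((measurable_indConvSum ha hsum).div (by fun_prop)).aestronglyMeasurable
  have hnonneg : 0 ≤ᵐ[volume.restrict (Ioi 0)] fun t => indConvSum p q a t / (x + t) ^ 2 :=
    ae_of_all _ fun t => div_nonneg (indConvSum_nonneg t) (sq_nonneg _)
  constructor
  · exact (lintegral_ofReal_ne_top_iff_integrable hmeas hnonneg).1
      (hlint ▸ ENNReal.ofReal_ne_top)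
  · rw [integral_eq_lintegral_of_nonneg_ae hnonneg hmeas, hlint,
      ENNReal.toReal_ofReal (hL.nonneg hterm)]

end Density

lemma isGenStieltjes_of_density {lam : ℝ} {F D : ℝ → ℝ} (hD : Measurable D)
    (hD_nonneg : ∀ t, 0 ≤ D t)
    (hint : ∀ x, 0 < x → IntegrableOn (fun t => D t * (x + t) ^ (-lam)) (Ioi 0))
    (hF : ∀ x, 0 < x → F x = ∫ t in Ioi 0, D t * (x + t) ^ (-lam)) :
    IsGenStieltjes lam F := by
  have hmeas : Measurable fun t => ENNReal.ofReal (D t) := hD.ennreal_ofReal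
  have hfinite : ∀ᵐ t ∂volume.restrict (Ioi 0), ENNReal.ofReal (D t) < ∞ :=
    ae_of_all _ fun _ => ENNReal.ofReal_lt_top
  refine ⟨(volume.restrict (Ioi 0)).withDensity fun t => ENNReal.ofReal (D t), 0, le_rfl, ?_,
    fun x hx => ⟨?_, ?_⟩⟩
  · refine withDensity_absolutelyContinuous _ _ ?_
    rw [Measure.restrict_apply measurableSet_Iio, Iio_inter_Ioi, Ioo_self, measure_empty]
  · rw [integrable_withDensity_iff_integrable_smul' hmeas hfinite]
    simpa only [ENNReal.toReal_ofReal (hD_nonneg _), smul_eq_mul, IntegrableOn] using hint x hx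
  · rw [integral_withDensity_eq_integral_toReal_smul hmeas hfinite, add_zero, hF x hx]
    simp only [ENNReal.toReal_ofReal (hD_nonneg _), smul_eq_mul]

theorem stmt14_general {ι : Type*} (a : ι → ℝ) (ha : ∀ i, 0 < a i)
    (hsum : Summable fun i => 1 / a i ^ 2) (α β : ℝ) (f : ℝ → ℝ)
    (hf : ∀ x : ℝ, f x = Real.exp (α * x + β) *
      ∏' i, ((1 + x / a i) * Real.exp (-x / a i)))
    (p q : ℝ) (hp : 0 ≤ p) (hq : 0 ≤ q) :
    IsGenStieltjes 2
      (fun x => Real.log (f (x + p) * f (x + q) / (f x * f (x + (p + q))))) ∧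
    ∀ x : ℝ, 0 < x →
      Real.log (f (x + p) * f (x + q) / (f x * f (x + (p + q))))
        = ∫ t in Ioi (0:ℝ), (∑' i, indConv p q (t - a i)) / (x + t) ^ 2 := by
  have hrep := fun x (hx : 0 < x) => integrableOn_indConvSum_div_sq_and_integral_eq ha hsum hx
    hp hq (hasSum_negMixedDiff_log_add ha hsum hf hx.le hp hq)
  have hkernel : ∀ x t : ℝ,
      indConvSum p q a t * (x + t) ^ (-2 : ℝ) = indConvSum p q a t / (x + t) ^ 2 := fun x t => by
    rw [div_eq_mul_inv, Real.rpow_neg_ofNat, zpow_neg, zpow_ofNat]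
  refine ⟨isGenStieltjes_of_density (D := indConvSum p q a)
    (measurable_indConvSum ha hsum) indConvSum_nonneg ?_ ?_,
    fun x hx => (hrep x hx).2.symm⟩
  · simpa only [hkernel] using fun x hx => (hrep x hx).1
  · simpa only [hkernel] using fun x hx => (hrep x hx).2.symm

/-- Theorem: for an entire function `f` of genus 1 with only negative zeros `-aₙ` and
`f(0) > 0` (restricted to the reals via its Hadamard product), and `p, q > 0`, `c = p + q`,
the function `x ↦ log(f(x+p)f(x+q)/(f(x)f(x+c)))` is a generalized Stieltjes function of
order 2 with representing density `(χ_{(0,p)} * χ_{(0,q)} * Σₙ ε_{aₙ})(t)`. -/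
theorem stmt14 (a : ℕ → ℝ) (ha : 0 < a 0) (hmono : Monotone a)
    (hsum : Summable (fun n : ℕ => 1 / (a n) ^ 2))
    (α β : ℝ) (f : ℝ → ℝ)
    (hf : ∀ x : ℝ, f x = Real.exp (α * x + β) *
      ∏' n : ℕ, ((1 + x / a n) * Real.exp (-x / a n)))
    (p q : ℝ) (hp : 0 < p) (hq : 0 < q) :
    IsGenStieltjes 2
      (fun x => Real.log (f (x + p) * f (x + q) / (f x * f (x + (p + q))))) ∧
    ∀ x : ℝ, 0 < x →
      Real.log (f (x + p) * f (x + q) / (f x * f (x + (p + q))))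
        = ∫ t in Set.Ioi (0:ℝ), (∑' n : ℕ, indConv p q (t - a n)) / (x + t) ^ 2 :=
  stmt14_general a (fun n => ha.trans_le (hmono n.zero_le)) hsum α β f hf p q hp.le hq.le
end

section
/- Let N be a nonnegative integer and 0 < s < 1. Then the function x ↦ Γ(x)/Γ(x+N+s) on (0,∞) is a generalized Stieltjes function of order N+1. -/
open MeasureTheory Filter Set

/-!
Induction on `N`. Expanding `(1 - t) ^ (s - 1)` in the beta integral gives
`Γ(x) Γ(s) / Γ(x + s) = ∑ₖ (1 - s)ₖ / k! · (x + k)⁻¹`, whose coefficients are nonnegative because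
`s ≤ 1`: this is a Stieltjes transform of order `1`. For the step, `G a x = Γ(x) / Γ(x + a)`
satisfies `G a x - G a (x + 1) = a · G (a + 1) x`, and differencing a transform of order `λ` gives
one of order `λ + 1`: since `y ^ (-λ) - (y + h) ^ (-λ) = λ ∫ v in 0..h, (y + v) ^ (-(λ + 1))`, the
measure gets convolved with Lebesgue measure on `(0, h]`.
-/

/-- `μ` is a measure on `[0, ∞)` whose generalized Stieltjes transform of order `lam` is `f` on
`(0, ∞)`; this is `IsGenStieltjes` with a specified measure and additive constant `0`. Measures on
`[0, ∞)` are encoded as measures on `ℝ` for which almost every point is nonnegative. -/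
structure IsStieltjesMeasure (lam : ℝ) (f : ℝ → ℝ) (μ : Measure ℝ) : Prop where
  ae_nonneg : ∀ᵐ t ∂μ, 0 ≤ t
  integrable : ∀ x : ℝ, 0 < x → Integrable (fun t => (x + t) ^ (-lam)) μ
  eq_integral : ∀ x : ℝ, 0 < x → f x = ∫ t, (x + t) ^ (-lam) ∂μ

lemma ae_nonneg_conv {μ ν : Measure ℝ} (hμ : ∀ᵐ t ∂μ, 0 ≤ t)
    (hν : ∀ᵐ t ∂ν, 0 ≤ t) : ∀ᵐ t ∂(μ ∗ ν), 0 ≤ t := by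
  rw [Measure.conv, ae_map_iff (by fun_prop) measurableSet_Ici]
  filter_upwards [Measure.quasiMeasurePreserving_fst.ae hμ,
    Measure.quasiMeasurePreserving_snd.ae hν] with p hp₁ hp₂
  exact add_nonneg hp₁ hp₂

lemma integrableOn_Ioc_add_rpow {y : ℝ} (hy : 0 < y) (h p : ℝ) :
    IntegrableOn (fun v => (y + v) ^ p) (Ioc 0 h) := by
  have hcont : ContinuousOn (fun v : ℝ => (y + v) ^ p) (Icc 0 h) :=
    (continuousOn_const.add continuousOn_id).rpow_const
      fun v hv => Or.inl (add_pos_of_pos_of_nonneg hy hv.1).ne'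
  exact hcont.integrableOn_Icc.mono_set Ioc_subset_Icc_self

lemma setIntegral_Ioc_add_rpow {lam y h : ℝ} (hlam : lam ≠ 0) (hy : 0 < y) (hh : 0 ≤ h) :
    ∫ v in Ioc 0 h, (y + v) ^ (-(lam + 1)) = (y ^ (-lam) - (y + h) ^ (-lam)) / lam := by
  have hzero : (0 : ℝ) ∉ uIcc (y + 0) (y + h) := by
    rw [uIcc_of_le (by linarith)]
    exact fun hmem => by linarith [hmem.1]
  rw [← intervalIntegral.integral_of_le hh,
    intervalIntegral.integral_comp_add_left (fun u => u ^ (-(lam + 1))) y,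
    integral_rpow (Or.inr ⟨by contrapose! hlam; linarith, hzero⟩),
    show -(lam + 1) + 1 = -lam by ring, add_zero, div_neg, ← neg_div, neg_sub]

namespace IsStieltjesMeasure

variable {lam : ℝ} {f : ℝ → ℝ} {μ : Measure ℝ}

lemma isGenStieltjes (hf : IsStieltjesMeasure lam f μ) : IsGenStieltjes lam f := by
  refine ⟨μ, 0, le_rfl, ?_, fun x hx => ⟨hf.integrable x hx, by rw [hf.eq_integral x hx, add_zero]⟩⟩
  simpa only [ae_iff, not_le, Iio_def] using hf.ae_nonneg

lemma congr {g : ℝ → ℝ} (hf : IsStieltjesMeasure lam f μ) (hfg : ∀ x, 0 < x → g x = f x) :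
    IsStieltjesMeasure lam g μ where
  ae_nonneg := hf.ae_nonneg
  integrable := hf.integrable
  eq_integral x hx := (hfg x hx).trans (hf.eq_integral x hx)

lemma const_mul {c : ℝ} (hc : 0 ≤ c) (hf : IsStieltjesMeasure lam f μ) :
    IsStieltjesMeasure lam (fun x => c * f x) (ENNReal.ofReal c • μ) where
  ae_nonneg := Measure.ae_smul_measure hf.ae_nonneg _
  integrable x hx := (hf.integrable x hx).smul_measure ENNReal.ofReal_ne_top
  eq_integral x hx := by
    rw [integral_smul_measure, ENNReal.toReal_ofReal hc, smul_eq_mul, hf.eq_integral x hx]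

lemma sub_shift [SFinite μ] (hf : IsStieltjesMeasure lam f μ) (hlam : lam ≠ 0) {h : ℝ}
    (hh : 0 ≤ h) :
    IsStieltjesMeasure (lam + 1) (fun x => (f x - f (x + h)) / lam)
      (μ ∗ volume.restrict (Ioc 0 h)) := by
  have hnonneg : ∀ᵐ v ∂volume.restrict (Ioc 0 h), 0 ≤ v :=
    ae_restrict_of_forall_mem measurableSet_Ioc fun v hv => hv.1.le
  have hinner {x : ℝ} (hx : 0 < x) :
      (fun t => ∫ v in Ioc 0 h, (x + (t + v)) ^ (-(lam + 1))) =ᵐ[μ]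
        fun t => ((x + t) ^ (-lam) - (x + h + t) ^ (-lam)) / lam := by
    filter_upwards [hf.ae_nonneg] with t ht
    simp only [← add_assoc, setIntegral_Ioc_add_rpow hlam (add_pos_of_pos_of_nonneg hx ht) hh,
      add_right_comm x t h]
  have hdiff {x : ℝ} (hx : 0 < x) :
      Integrable (fun t => ((x + t) ^ (-lam) - (x + h + t) ^ (-lam)) / lam) μ :=
    ((hf.integrable x hx).sub (hf.integrable (x + h) (by positivity))).div_const lam
  have hint (x : ℝ) (hx : 0 < x) :
      Integrable (fun t => (x + t) ^ (-(lam + 1))) (μ ∗ volume.restrict (Ioc 0 h)) := by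
    have hmeas : Measurable fun t : ℝ => (x + t) ^ (-(lam + 1)) := by fun_prop
    refine (integrable_conv_iff hmeas.aestronglyMeasurable).2 ⟨?_, (hdiff hx).congr ?_⟩
    · filter_upwards [hf.ae_nonneg] with t ht
      simpa only [← add_assoc, IntegrableOn] using
        integrableOn_Ioc_add_rpow (add_pos_of_pos_of_nonneg hx ht) h (-(lam + 1))
    · filter_upwards [hf.ae_nonneg, hinner hx] with t ht hinner_t
      rw [← hinner_t]
      refine setIntegral_congr_fun measurableSet_Ioc fun v hv => ?_
      have hv₀ := hv.1
      exact (Real.norm_of_nonneg (by positivity)).symm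
  refine ⟨ae_nonneg_conv hf.ae_nonneg hnonneg, hint, fun x hx => ?_⟩
  rw [integral_conv (hint x hx), integral_congr_ae (hinner hx), integral_div,
    integral_sub (hf.integrable x hx) (hf.integrable (x + h) (by positivity)),
    hf.eq_integral x hx, hf.eq_integral (x + h) (by positivity)]

end IsStieltjesMeasure

lemma multichoose_nonneg {r : ℝ} (hr : 0 ≤ r) (k : ℕ) : 0 ≤ Ring.multichoose r k := by
  have hpoch : 0 ≤ (ascPochhammer ℝ k).eval r := by
    induction k with
    | zero => simp
    | succ k ih => rw [ascPochhammer_succ_eval]; positivity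
  have hfac := Ring.factorial_nsmul_multichoose_eq_ascPochhammer r k
  rw [Polynomial.ascPochhammer_smeval_eq_eval, nsmul_eq_mul] at hfac
  exact nonneg_of_mul_nonneg_right (hfac ▸ hpoch) (by positivity)

lemma hasSum_multichoose_mul_pow (r : ℝ) {t : ℝ} (ht : |t| < 1) :
    HasSum (fun k : ℕ => Ring.multichoose r k * t ^ k) ((1 - t) ^ (-r)) := by
  have hseries := (Real.one_div_one_sub_rpow_hasFPowerSeriesOnBall_zero r).hasSum (y := t)
    (by simpa [enorm_eq_nnnorm, ← NNReal.coe_lt_coe] using ht)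
  rw [Real.rpow_neg (by linarith [(abs_lt.1 ht).2])]
  simpa [Ring.multichoose_eq, mul_comm] using hseries

lemma setIntegral_Ioo_rpow_sub_one {y : ℝ} (hy : 0 < y) :
    ∫ t in Ioo (0 : ℝ) 1, t ^ (y - 1) = y⁻¹ := by
  rw [← integral_Ioc_eq_integral_Ioo, ← intervalIntegral.integral_of_le zero_le_one,
    integral_rpow (Or.inl (by linarith))]
  simp [Real.zero_rpow hy.ne']

lemma setIntegral_Ioo_rpow_mul_one_sub_rpow {x s : ℝ} (hx : 0 < x) (hs : 0 < s) :
    ∫ t in Ioo (0 : ℝ) 1, t ^ (x - 1) * (1 - t) ^ (s - 1) = ProbabilityTheory.beta x s := by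
  have hbeta := ProbabilityTheory.beta_pos hx hs
  have hdensity : ∫ t in Ioo (0 : ℝ) 1,
      1 / ProbabilityTheory.beta x s * t ^ (x - 1) * (1 - t) ^ (s - 1) = 1 := by
    rw [integral_eq_lintegral_of_nonneg_ae _ (by fun_prop), ← ProbabilityTheory.lintegral_betaPDF,
      ProbabilityTheory.lintegral_betaPDF_eq_one hx hs, ENNReal.toReal_one]
    refine ae_restrict_of_forall_mem measurableSet_Ioo fun t ht => ?_
    have ht₀ := ht.1
    have ht₁ := sub_pos.2 ht.2
    positivity
  simp_rw [mul_assoc, integral_const_mul] at hdensity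
  field_simp at hdensity
  exact hdensity

lemma hasSum_integral_of_nonneg {α ι : Type*} [Countable ι] [MeasurableSpace α] {μ : Measure α}
    {F : ι → α → ℝ} {f : α → ℝ} (hF : ∀ i, AEStronglyMeasurable (F i) μ)
    (hF_nonneg : ∀ i, 0 ≤ᵐ[μ] F i) (hf : Integrable f μ)
    (hsum : ∀ᵐ a ∂μ, HasSum (fun i => F i a) (f a)) :
    HasSum (fun i => ∫ a, F i a ∂μ) (∫ a, f a ∂μ) := by
  refine hasSum_integral_of_dominated_convergence F hF (fun i => ?_)
    (hsum.mono fun a ha => ha.summable) (hf.congr (hsum.mono fun a ha => ha.tsum_eq.symm)) hsum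
  filter_upwards [hF_nonneg i] with a ha
  exact (Real.norm_of_nonneg ha).le

lemma hasSum_beta {x s : ℝ} (hx : 0 < x) (hs0 : 0 < s) (hs1 : s ≤ 1) :
    HasSum (fun k : ℕ => Ring.multichoose (1 - s) k * (x + k)⁻¹) (ProbabilityTheory.beta x s) := by
  have hbeta := setIntegral_Ioo_rpow_mul_one_sub_rpow hx hs0
  have hterm (k : ℕ) : ∫ t in Ioo (0 : ℝ) 1, Ring.multichoose (1 - s) k * t ^ (x + k - 1) =
      Ring.multichoose (1 - s) k * (x + k)⁻¹ := by
    rw [integral_const_mul, setIntegral_Ioo_rpow_sub_one (by positivity)]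
  simp_rw [← hterm, ← hbeta]
  refine hasSum_integral_of_nonneg (fun k => by fun_prop) (fun k => ?_) ?_ ?_
  · exact ae_restrict_of_forall_mem measurableSet_Ioo fun t ht =>
      mul_nonneg (multichoose_nonneg (sub_nonneg.2 hs1) k) (Real.rpow_nonneg ht.1.le _)
  · exact .of_integral_ne_zero (hbeta ▸ (ProbabilityTheory.beta_pos hx hs0).ne')
  · refine ae_restrict_of_forall_mem measurableSet_Ioo fun t ht => ?_
    have hbinomial := (hasSum_multichoose_mul_pow (1 - s)
      (abs_lt.2 ⟨by linarith [ht.1], ht.2⟩)).mul_left (t ^ (x - 1))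
    rw [neg_sub] at hbinomial
    refine hbinomial.congr_fun fun k => ?_
    rw [add_sub_right_comm, Real.rpow_add_natCast ht.1.ne']
    ring

lemma hasSum_gamma_div_gamma {x s : ℝ} (hx : 0 < x) (hs0 : 0 < s) (hs1 : s ≤ 1) :
    HasSum (fun k : ℕ => Ring.multichoose (1 - s) k / Real.Gamma s * (x + k)⁻¹)
      (Real.Gamma x / Real.Gamma (x + s)) := by
  have hvalue : ProbabilityTheory.beta x s / Real.Gamma s = Real.Gamma x / Real.Gamma (x + s) := by
    rw [ProbabilityTheory.beta, div_right_comm,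
      mul_div_cancel_right₀ _ (Real.Gamma_pos_of_pos hs0).ne']
  simpa only [hvalue, div_mul_eq_mul_div] using
    (hasSum_beta hx hs0 hs1).div_const (Real.Gamma s)

/-- The measure `Γ(s)⁻¹ ∑ₖ (1 - s)ₖ / k! · δₖ`, whose Stieltjes transform of order `1` is
`x ↦ Γ(x) / Γ(x + s)` for `0 < s ≤ 1`. -/
noncomputable def gammaRatioMeasure (s : ℝ) : Measure ℝ :=
  .sum fun k : ℕ => ENNReal.ofReal (Ring.multichoose (1 - s) k / Real.Gamma s) • .dirac (k : ℝ)

instance (s : ℝ) : SFinite (gammaRatioMeasure s) := by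
  unfold gammaRatioMeasure
  infer_instance

lemma isStieltjesMeasure_gammaRatioMeasure {s : ℝ} (hs0 : 0 < s) (hs1 : s ≤ 1) :
    IsStieltjesMeasure 1 (fun x => Real.Gamma x / Real.Gamma (x + s)) (gammaRatioMeasure s) := by
  have hcoeff (k : ℕ) : 0 ≤ Ring.multichoose (1 - s) k / Real.Gamma s :=
    div_nonneg (multichoose_nonneg (sub_nonneg.2 hs1) k) (Real.Gamma_pos_of_pos hs0).le
  have hsum {x : ℝ} (hx : 0 < x) :
      HasSum (fun k : ℕ => (ENNReal.ofReal (Ring.multichoose (1 - s) k / Real.Gamma s)).toReal *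
        (x + k) ^ (-1 : ℝ)) (Real.Gamma x / Real.Gamma (x + s)) := by
    simpa only [ENNReal.toReal_ofReal (hcoeff _), Real.rpow_neg_one] using
      hasSum_gamma_div_gamma hx hs0 hs1
  have hsummable {x : ℝ} (hx : 0 < x) : Summable fun k : ℕ =>
      (ENNReal.ofReal (Ring.multichoose (1 - s) k / Real.Gamma s)).toReal *
        ‖(x + k) ^ (-1 : ℝ)‖ :=
    (hsum hx).summable.congr fun k => by rw [Real.norm_of_nonneg (by positivity)]
  refine ⟨?_, fun x hx => ?_, fun x hx => ?_⟩
  · exact Measure.ae_sum_iff.2 fun k => Measure.ae_smul_measure (by simp [ae_dirac_eq]) _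
  · exact integrable_sum_dirac (fun _ => ENNReal.ofReal_ne_top) (hsummable hx)
  · exact (hsum hx).unique
      (hasSum_integral_sum_dirac (fun _ => ENNReal.ofReal_ne_top) (hsummable hx))

lemma gamma_div_gamma_sub_shift {a x : ℝ} (hx : x ≠ 0) (hxa : x + a ≠ 0) :
    Real.Gamma x / Real.Gamma (x + a) - Real.Gamma (x + 1) / Real.Gamma (x + 1 + a) =
      a * (Real.Gamma x / Real.Gamma (x + (a + 1))) := by
  rw [Real.Gamma_add_one hx, add_right_comm x 1 a, ← add_assoc x a 1, Real.Gamma_add_one hxa]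
  field_simp
  ring

lemma IsStieltjesMeasure.gamma_div_gamma_add_one {lam a : ℝ} {μ : Measure ℝ} [SFinite μ]
    (hlam : 0 < lam) (ha : 0 < a)
    (hμ : IsStieltjesMeasure lam (fun x => Real.Gamma x / Real.Gamma (x + a)) μ) :
    IsStieltjesMeasure (lam + 1) (fun x => Real.Gamma x / Real.Gamma (x + (a + 1)))
      (ENNReal.ofReal (lam / a) • (μ ∗ volume.restrict (Ioc 0 1))) := by
  refine ((hμ.sub_shift hlam.ne' zero_le_one).const_mul (by positivity)).congr fun x hx => ?_
  rw [gamma_div_gamma_sub_shift hx.ne' (add_pos hx ha).ne']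
  field_simp

theorem stmt15_general (N : ℕ) (s : ℝ) (hs0 : 0 < s) (hs1 : s ≤ 1) :
    ∃ μ : Measure ℝ, SFinite μ ∧
      IsStieltjesMeasure (N + 1) (fun x => Real.Gamma x / Real.Gamma (x + N + s)) μ := by
  induction N with
  | zero =>
    exact ⟨gammaRatioMeasure s, inferInstance,
      by simpa using isStieltjesMeasure_gammaRatioMeasure hs0 hs1⟩
  | succ N ih =>
    obtain ⟨μ, _, hμ⟩ := ih
    simp only [add_assoc _ (N : ℝ) s] at hμ
    have hadd (x : ℝ) : x + (N + 1) + s = x + (N + s + 1) := by ring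
    refine ⟨ENNReal.ofReal ((N + 1) / (N + s)) • (μ ∗ volume.restrict (Ioc 0 1)),
      inferInstance, ?_⟩
    simpa only [Nat.cast_succ, hadd] using
      hμ.gamma_div_gamma_add_one (by positivity) (by positivity)

/-- Theorem: for `N ∈ ℕ` and `0 < s < 1`, the function `x ↦ Γ(x)/Γ(x+N+s)` is a generalized
Stieltjes function of order `N+1`. -/
theorem stmt15 (N : ℕ) (s : ℝ) (hs0 : 0 < s) (hs1 : s < 1) :
    IsGenStieltjes ((N : ℝ) + 1)
      (fun x => Real.Gamma x / Real.Gamma (x + N + s)) := by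
  obtain ⟨μ, -, hμ⟩ := stmt15_general N s hs0 hs1.le
  exact hμ.isGenStieltjes
end

section
/- Let {a_n}_{n≥1} be reals with 0 < a_1 ≤ a_2 ≤ … and Σ_{n=1}^∞ 1/a_n² < ∞, let α, β ∈ ℝ, and let f be the entire function f(z) = e^{αz+β} Π_{n=1}^∞ (1 + z/a_n) e^{-z/a_n} (a real entire function of genus 1 with only negative zeros and f(0) > 0). For s > 0, the function h(x) = f'(x)/f(x) - f'(x+s)/f(x+s) = (log f)'(x) - (log f)'(x+s), x > 0, is a generalized Stieltjes function of order 2. -/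
open MeasureTheory Filter Set

/-!
Differentiating `log f` termwise gives `(log f)'(x) = α + ∑ (1 / (x + aₙ) - 1 / aₙ)`. In the
difference `h` the constant `α` and the convergence terms `1 / aₙ` cancel, leaving
`h(x) = ∑ (1 / (x + aₙ) - 1 / (x + aₙ + s))`. Each summand is `∫ (x + t)⁻² dt` over `(aₙ, aₙ + s]`,
hence lies in `S₂`, and `S₂` is closed under pointwise convergent sums: add the measures.
-/

section GenStieltjes

variable {r : ℝ}

lemma ae_zero_le_add_rpow {μ : Measure ℝ} (hμ : μ (Iio 0) = 0) {x : ℝ} (hx : 0 ≤ x) :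
    ∀ᵐ t ∂μ, 0 ≤ (x + t) ^ r := by
  filter_upwards [measure_eq_zero_iff_ae_notMem.1 hμ] with t ht
  exact Real.rpow_nonneg (add_nonneg hx (not_lt.1 ht)) r

lemma isGenStieltjes_of_hasSum {ι : Type*} [Countable ι] {g : ι → ℝ → ℝ} {G : ℝ → ℝ}
    (hg : ∀ i, IsGenStieltjes r (g i)) (hG : ∀ x, 0 < x → HasSum (fun i => g i x) (G x)) :
    IsGenStieltjes r G := by
  choose μ c hc hμ hrep using hg
  have const_le (i : ι) : c i ≤ g i 1 := by
    rw [(hrep i 1 one_pos).2]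
    exact le_add_of_nonneg_left (integral_nonneg_of_ae (ae_zero_le_add_rpow (hμ i) zero_le_one))
  have summable_const : Summable c := .of_nonneg_of_le hc const_le (hG 1 one_pos).summable
  refine ⟨Measure.sum μ, ∑' i, c i, tsum_nonneg hc, ?_, fun x hx => ?_⟩
  · simpa only [Measure.sum_apply _ measurableSet_Iio, ENNReal.tsum_eq_zero] using hμ
  have summable_integral_norm : Summable fun i => ∫ t, ‖(x + t) ^ (-r)‖ ∂μ i := by
    refine ((hG x hx).summable.sub summable_const).congr fun i => ?_
    rw [(hrep i x hx).2, add_sub_cancel_right]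
    refine integral_congr_ae ?_
    filter_upwards [ae_zero_le_add_rpow (hμ i) hx.le] with t ht using (Real.norm_of_nonneg ht).symm
  have integrable_sum : Integrable (fun t => (x + t) ^ (-r)) (Measure.sum μ) :=
    integrable_sum_measure (fun i => (hrep i x hx).1) summable_integral_norm
  refine ⟨integrable_sum, (hG x hx).unique ?_⟩
  simpa only [(hrep _ x hx).2] using
    (hasSum_integral_measure integrable_sum).add summable_const.hasSum

lemma integral_add_rpow_neg_add_one (hr : r ≠ 0) {x b c : ℝ} (hb : 0 < x + b) (hc : 0 < x + c) :
    ∫ t in b..c, (x + t) ^ (-(r + 1)) = ((x + b) ^ (-r) - (x + c) ^ (-r)) / r := by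
  have hexp : -(r + 1) ≠ -1 := by simpa using hr
  rw [intervalIntegral.integral_comp_add_left (fun u => u ^ (-(r + 1))),
    integral_rpow (.inr ⟨hexp, notMem_uIcc_of_lt hb hc⟩), show -(r + 1) + 1 = -r by ring,
    div_neg, ← neg_div, neg_sub]

lemma isGenStieltjes_rpow_neg_sub_rpow_neg (hr : 0 < r) {b c : ℝ} (hb : 0 ≤ b) (hbc : b ≤ c) :
    IsGenStieltjes (r + 1) (fun x => (x + b) ^ (-r) - (x + c) ^ (-r)) := by
  refine ⟨ENNReal.ofReal r • volume.restrict (Ioc b c), 0, le_rfl, ?_, fun x hx => ⟨?_, ?_⟩⟩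
  · have hdisj : Disjoint (Iio 0) (Ioc b c) :=
      disjoint_left.2 fun t ht htbc => (hb.trans_lt htbc.1).not_gt ht
    rw [Measure.smul_apply, Measure.restrict_apply measurableSet_Iio, hdisj.inter_eq, measure_empty,
      smul_zero]
  · have hcont : ContinuousOn (fun t => (x + t) ^ (-(r + 1))) (Icc b c) :=
      ContinuousOn.rpow_const (by fun_prop) fun t ht => .inl (by linarith [ht.1])
    exact (hcont.integrableOn_Icc.mono_set Ioc_subset_Icc_self).smul_measure ENNReal.ofReal_ne_top
  · rw [integral_smul_measure, ← intervalIntegral.integral_of_le hbc,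
      integral_add_rpow_neg_add_one hr.ne' (by linarith) (by linarith),
      ENNReal.toReal_ofReal hr.le, smul_eq_mul, mul_div_cancel₀ _ hr.ne', add_zero]

lemma isGenStieltjes_two_inv_sub_inv {b c : ℝ} (hb : 0 ≤ b) (hbc : b ≤ c) :
    IsGenStieltjes 2 (fun x => 1 / (x + b) - 1 / (x + c)) := by
  simpa only [Real.rpow_neg_one, one_div, one_add_one_eq_two] using
    isGenStieltjes_rpow_neg_sub_rpow_neg one_pos hb hbc

end GenStieltjes

section GenusOneFactor

/-- The Weierstrass primary factor of genus one with its zero at `-a`, that is, `E₁(-x / a)` for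
`E₁(z) = (1 - z) exp z`. -/
noncomputable def genusOneFactor (a x : ℝ) : ℝ :=
  (1 + x / a) * Real.exp (-x / a)

variable {a x : ℝ}

lemma genusOneFactor_pos (ha : 0 < a) (hx : 0 ≤ x) : 0 < genusOneFactor a x := by
  unfold genusOneFactor
  positivity

lemma log_genusOneFactor (h : 1 + x / a ≠ 0) :
    Real.log (genusOneFactor a x) = Real.log (1 + x / a) - x / a := by
  rw [genusOneFactor, Real.log_mul h (Real.exp_ne_zero _), Real.log_exp, neg_div, sub_eq_add_neg]

lemma abs_log_genusOneFactor_le (ha : 0 < a) (hx : 0 ≤ x) :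
    |Real.log (genusOneFactor a x)| ≤ x ^ 2 * (1 / a ^ 2) := by
  set u := x / a with hu
  have hu0 : 0 ≤ u := by positivity
  have hpos : 0 < 1 + u := by positivity
  have upper : Real.log (1 + u) ≤ u := by linarith [Real.log_le_sub_one_of_pos hpos]
  have lower : u - u ^ 2 ≤ Real.log (1 + u) := calc
    u - u ^ 2 ≤ 1 - (1 + u)⁻¹ := by
      rw [← sub_nonneg]
      have : 1 - (1 + u)⁻¹ - (u - u ^ 2) = u ^ 3 / (1 + u) := by field_simp; ring
      rw [this]
      positivity
    _ ≤ Real.log (1 + u) := Real.one_sub_inv_le_log_of_pos hpos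
  rw [log_genusOneFactor hpos.ne', abs_of_nonpos (sub_nonpos.2 upper),
    show x ^ 2 * (1 / a ^ 2) = u ^ 2 by rw [hu]; ring]
  linarith

lemma hasDerivAt_log_genusOneFactor (ha : a ≠ 0) (hx : x + a ≠ 0) :
    HasDerivAt (fun y => Real.log (genusOneFactor a y)) (1 / (x + a) - 1 / a) x := by
  have hfac : 1 + x / a ≠ 0 := by
    rw [one_add_div ha, add_comm]
    exact div_ne_zero hx ha
  have hdiv : HasDerivAt (fun y => y / a) (1 / a) x := (hasDerivAt_id x).div_const a
  have hsub := ((hdiv.const_add 1).log hfac).sub hdiv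
  refine (hsub.congr_of_eventuallyEq ?_).congr_deriv ?_
  · filter_upwards [(hdiv.const_add 1).continuousAt.eventually_ne hfac] with y hy
    exact log_genusOneFactor hy
  · rw [one_add_div ha, add_comm a x]
    field_simp

lemma abs_one_div_add_sub_one_div_le (ha : 0 < a) (hx : 0 ≤ x) :
    |1 / (x + a) - 1 / a| ≤ x * (1 / a ^ 2) := by
  have heq : 1 / (x + a) - 1 / a = -(x / ((x + a) * a)) := by field_simp; ring
  rw [heq, abs_neg, abs_of_nonneg (by positivity), mul_one_div]
  gcongr
  nlinarith

end GenusOneFactor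

section GenusOneProduct

variable {ι : Type*} {a : ι → ℝ}

/-- The function `exp (α x + β) ∏ (1 + x / aᵢ) exp (-x / aᵢ)`, the canonical form of a real entire
function of genus at most one with zeros `-aᵢ`, restricted to the real line. -/
noncomputable def genusOneProduct (a : ι → ℝ) (α β x : ℝ) : ℝ :=
  Real.exp (α * x + β) * ∏' i, genusOneFactor (a i) x

lemma summable_log_genusOneFactor (ha : ∀ i, 0 < a i) (hsum : Summable fun i => 1 / a i ^ 2)
    {x : ℝ} (hx : 0 ≤ x) : Summable fun i => Real.log (genusOneFactor (a i) x) :=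
  .of_norm_bounded (hsum.mul_left (x ^ 2)) fun i => abs_log_genusOneFactor_le (ha i) hx

lemma summable_one_div_add_sub_one_div (ha : ∀ i, 0 < a i)
    (hsum : Summable fun i => 1 / a i ^ 2) {x : ℝ} (hx : 0 ≤ x) :
    Summable fun i => 1 / (x + a i) - 1 / a i :=
  .of_norm_bounded (hsum.mul_left x) fun i => abs_one_div_add_sub_one_div_le (ha i) hx

lemma hasDerivAt_tsum_log_genusOneFactor (ha : ∀ i, 0 < a i)
    (hsum : Summable fun i => 1 / a i ^ 2) {x : ℝ} (hx : 0 < x) :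
    HasDerivAt (fun y => ∑' i, Real.log (genusOneFactor (a i) y))
      (∑' i, (1 / (x + a i) - 1 / a i)) x := by
  have hmem : x ∈ Ioo 0 (x + 1) := ⟨hx, lt_add_one x⟩
  have hderiv (i : ι) (y : ℝ) (hy : y ∈ Ioo 0 (x + 1)) :
      HasDerivAt (fun z => Real.log (genusOneFactor (a i) z)) (1 / (y + a i) - 1 / a i) y :=
    hasDerivAt_log_genusOneFactor (ha i).ne' (add_pos hy.1 (ha i)).ne'
  have hbound (i : ι) (y : ℝ) (hy : y ∈ Ioo 0 (x + 1)) :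
      ‖1 / (y + a i) - 1 / a i‖ ≤ (x + 1) * (1 / a i ^ 2) :=
    (abs_one_div_add_sub_one_div_le (ha i) hy.1.le).trans
      (mul_le_mul_of_nonneg_right hy.2.le (by positivity))
  exact hasDerivAt_tsum_of_isPreconnected (hsum.mul_left (x + 1)) isOpen_Ioo isPreconnected_Ioo
    hderiv hbound hmem (summable_log_genusOneFactor ha hsum hx.le) hmem

lemma genusOneProduct_eq_exp (ha : ∀ i, 0 < a i) (hsum : Summable fun i => 1 / a i ^ 2)
    (α β : ℝ) {x : ℝ} (hx : 0 ≤ x) :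
    genusOneProduct a α β x =
      Real.exp (α * x + β + ∑' i, Real.log (genusOneFactor (a i) x)) := by
  rw [genusOneProduct, Real.exp_add _ (∑' i, _), Real.rexp_tsum_eq_tprod
    (fun i => genusOneFactor_pos (ha i) hx) (summable_log_genusOneFactor ha hsum hx)]

lemma logDeriv_genusOneProduct (ha : ∀ i, 0 < a i) (hsum : Summable fun i => 1 / a i ^ 2)
    (α β : ℝ) {x : ℝ} (hx : 0 < x) :
    logDeriv (genusOneProduct a α β) x = α + ∑' i, (1 / (x + a i) - 1 / a i) := by
  have hlin : HasDerivAt (fun y => α * y + β) α x := by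
    simpa using ((hasDerivAt_id x).const_mul α).add_const β
  have hexp := (hlin.add (hasDerivAt_tsum_log_genusOneFactor ha hsum hx)).exp
  have heq : genusOneProduct a α β =ᶠ[nhds x]
      fun y => Real.exp (α * y + β + ∑' i, Real.log (genusOneFactor (a i) y)) := by
    filter_upwards [Ioi_mem_nhds hx] with y hy
    exact genusOneProduct_eq_exp ha hsum α β (mem_Ioi.1 hy).le
  rw [logDeriv_apply, (hexp.congr_of_eventuallyEq heq).deriv, heq.eq_of_nhds]
  exact mul_div_cancel_left₀ _ (Real.exp_ne_zero _)

lemma hasSum_logDeriv_genusOneProduct_sub (ha : ∀ i, 0 < a i)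
    (hsum : Summable fun i => 1 / a i ^ 2) (α β : ℝ) {x y : ℝ} (hx : 0 < x) (hy : 0 < y) :
    HasSum (fun i => 1 / (x + a i) - 1 / (y + a i))
      (logDeriv (genusOneProduct a α β) x - logDeriv (genusOneProduct a α β) y) := by
  rw [logDeriv_genusOneProduct ha hsum α β hx, logDeriv_genusOneProduct ha hsum α β hy,
    add_sub_add_left_eq_sub]
  simpa only [sub_sub_sub_cancel_right] using
    (summable_one_div_add_sub_one_div ha hsum hx.le).hasSum.sub
      (summable_one_div_add_sub_one_div ha hsum hy.le).hasSum

theorem stmt17_general [Countable ι] (ha : ∀ i, 0 < a i) (hsum : Summable fun i => 1 / a i ^ 2)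
    (α β : ℝ) {s : ℝ} (hs : 0 ≤ s) :
    IsGenStieltjes 2
      (fun x => logDeriv (genusOneProduct a α β) x - logDeriv (genusOneProduct a α β) (x + s)) := by
  refine isGenStieltjes_of_hasSum
    (fun i => isGenStieltjes_two_inv_sub_inv (ha i).le (le_add_of_nonneg_left hs)) fun x hx => ?_
  simpa only [add_assoc] using
    hasSum_logDeriv_genusOneProduct_sub ha hsum α β hx (add_pos_of_pos_of_nonneg hx hs)

end GenusOneProduct

/-- Corollary: for a real entire function `f` of genus 1 with only negative zeros `-aₙ` and
`f(0) > 0`, and `s > 0`, the function `h(x) = (log f)'(x) - (log f)'(x+s)` is a generalized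
Stieltjes function of order 2 on `(0,∞)`. -/
theorem stmt17 (a : ℕ → ℝ) (ha : 0 < a 0) (hmono : Monotone a)
    (hsum : Summable (fun n : ℕ => 1 / (a n) ^ 2))
    (α β : ℝ) (f : ℝ → ℝ)
    (hf : ∀ x : ℝ, f x = Real.exp (α * x + β) *
      ∏' n : ℕ, ((1 + x / a n) * Real.exp (-x / a n)))
    (s : ℝ) (hs : 0 < s) :
    IsGenStieltjes 2 (fun x => deriv f x / f x - deriv f (x + s) / f (x + s)) := by
  obtain rfl : f = genusOneProduct a α β := funext hf
  exact stmt17_general (fun n => ha.trans_le (hmono n.zero_le)) hsum α β hs.le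
end
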